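/- arXiv:1905.07545 — 2 statements merged into one kernel-verified Lean document; each statement's English description precedes it below -/
import Mathlib

section
/- Let p ∈ (1,∞), T ∈ (0,∞), u_0 ∈ L_p(ℝ^d), and f ∈ L_p((0,T); L_p(ℝ^d)). Suppose u : [0,T] → L_p(ℝ^d) is a weak solution of ∂_t u = a^{ij}(t) u_{x^i x^j} + f with u(0) = u_0, that u is continuous from [0,T] into L_p(ℝ^d), and that ∫_0^T |a(t)| ‖u(t,·)‖_{L_p} dt < ∞. Then sup_{t∈[0,T]} ‖u(t,·)‖_{L_p}^p ≤ N ( ‖u_0‖_{L_p}^p + ∫_0^T ‖f(t,·)‖_{L_p}^p dt ), where the constant N depends only on p and T (in particular, not on the coefficients a^{ij}). -/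
open MeasureTheory Set ENNReal

noncomputable section

/-- The partial derivative `∂_{x^i} φ` of a function on `ℝ^d`. -/
def pd {d : ℕ} (i : Fin d) (φ : (Fin d → ℝ) → ℝ) : (Fin d → ℝ) → ℝ :=
  fun x => fderiv ℝ φ x (Pi.single i 1)

/-- `|a(t)| = max_{i,j} |a^{ij}(t)|`. -/
def aMax {d : ℕ} (a : ℝ → Fin d → Fin d → ℝ) (t : ℝ) : ℝ :=
  ⨆ i, ⨆ j, |a t i j|

/-- `u` is a weak solution of `∂_t u = a^{ij}(t) u_{x^i x^j} + f`, `u(0) = u₀`, on `[0,T]`. -/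
def IsWeakSolution {d : ℕ} (p : ℝ≥0∞) (T : ℝ) (a : ℝ → Fin d → Fin d → ℝ)
    (u0 : Lp ℝ p (volume : Measure (Fin d → ℝ)))
    (f u : ℝ → Lp ℝ p (volume : Measure (Fin d → ℝ))) : Prop :=
  ∀ φ : (Fin d → ℝ) → ℝ, ContDiff ℝ (⊤ : ℕ∞) φ → HasCompactSupport φ →
    ∀ t ∈ Icc (0:ℝ) T,
      (∫ x, u t x * φ x) =
        (∫ x, u0 x * φ x) +
        ∫ s in Ioc (0:ℝ) t,
          ((∑ i, ∑ j, a s i j * ∫ x, u s x * pd i (pd j φ) x)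
            + ∫ x, f s x * φ x)


set_option linter.unusedSectionVars false


open Filter Topology in
lemma ap_ode {E : Type*} [NormedAddCommGroup E] [NormedSpace ℝ E] [CompleteSpace E]
    (W F : ℝ → E) (g : ℝ → ℝ) (T : ℝ) (hT : 0 ≤ T)
    (hF : IntervalIntegrable F volume 0 T) (hg : IntervalIntegrable g volume 0 T)
    (hW : ∀ t ∈ Icc (0:ℝ) T, W t = W 0 + ∫ s in (0:ℝ)..t, F s)
    (hd : ∀ t ∈ Ioc (0:ℝ) T, ∀ h : ℝ, 0 ≤ h → ‖W t‖ ≤ ‖W t - h • F t‖ + h * g t) :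
    ‖W T‖ ≤ ‖W 0‖ + ∫ s in (0:ℝ)..T, g s := by
  set n : ℝ → ℝ := fun t => ‖W t‖ with hn
  have hsub : ∀ s ∈ Icc (0:ℝ) T, ∀ t ∈ Icc (0:ℝ) T, IntervalIntegrable F volume s t := by
    intro s hs t ht
    apply hF.mono_set
    rw [uIcc_of_le hT]
    exact uIcc_subset_Icc hs ht
  have hWd : ∀ s ∈ Icc (0:ℝ) T, ∀ t ∈ Icc (0:ℝ) T, W t - W s = ∫ r in s..t, F r := by
    intro s hs t ht
    have h0 : (0:ℝ) ∈ Icc (0:ℝ) T := ⟨le_rfl, hT⟩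
    rw [hW t ht, hW s hs, ← intervalIntegral.integral_add_adjacent_intervals (hsub 0 h0 s hs)
      (hsub s hs t ht)]
    abel
  have hac : AbsolutelyContinuousOnInterval n 0 T := by
    have h1 := (hF.norm).absolutelyContinuousOnInterval_intervalIntegral (c := 0) (by simp)
    unfold AbsolutelyContinuousOnInterval at h1 ⊢
    refine squeeze_zero' (Eventually.of_forall fun _ => Finset.sum_nonneg fun _ _ => dist_nonneg)
      ?_ h1
    have : ∀ᶠ E in (AbsolutelyContinuousOnInterval.totalLengthFilter ⊓
        𝓟 (AbsolutelyContinuousOnInterval.disjWithin 0 T)),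
        E ∈ AbsolutelyContinuousOnInterval.disjWithin 0 T :=
      mem_inf_of_right (mem_principal_self _)
    filter_upwards [this] with E hE
    apply Finset.sum_le_sum
    intro i hi
    have hm := hE.1 i hi
    rw [uIcc_of_le hT] at hm
    have h0 : (0:ℝ) ∈ Icc (0:ℝ) T := ⟨le_rfl, hT⟩
    rw [dist_comm, dist_comm (∫ _ in _.._, _), Real.dist_eq, Real.dist_eq]
    rw [intervalIntegral.integral_interval_sub_left ((hsub _ h0 _ hm.2).norm)
      ((hsub _ h0 _ hm.1).norm)]
    calc |‖W (E.2 i).2‖ - ‖W (E.2 i).1‖| ≤ ‖W (E.2 i).2 - W (E.2 i).1‖ := abs_norm_sub_norm_le _ _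
      _ = ‖∫ r in (E.2 i).1..(E.2 i).2, F r‖ := by rw [hWd _ hm.1 _ hm.2]
      _ ≤ _ := intervalIntegral.norm_integral_le_abs_integral_norm
  have hae : ∀ᵐ t, t ∈ Ioo 0 T → deriv n t ≤ g t := by
    filter_upwards [hac.ae_differentiableAt, hF.ae_hasDerivAt_integral] with t h1 h2 ht
    have htI : t ∈ uIcc 0 T := by rw [uIcc_of_le hT]; exact Ioo_subset_Icc_self ht
    have hD := (h1 htI).hasDerivAt
    have hI := h2 htI 0 (by simp)
    have hWD : HasDerivAt W (F t) t := by
      have := hI.const_add (W 0)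
      refine this.congr_of_eventuallyEq ?_
      filter_upwards [Ioo_mem_nhds ht.1 ht.2] with s hs
      exact hW s (Ioo_subset_Icc_self hs)
    -- along h -> 0+
    have e1 : Tendsto (fun h : ℝ => h⁻¹ • (n (t - h) - n t)) (𝓝[>] 0) (𝓝 (-deriv n t)) := by
      have hk : HasDerivAt (fun h : ℝ => n (t - h)) (-deriv n t) 0 := by
        have := HasDerivAt.scomp (h := fun h : ℝ => t - h) (x := 0) (g₁ := n) (g₁' := deriv n t)
          (h' := -1) (by simpa using hD) ((hasDerivAt_id (0:ℝ)).const_sub t)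
        simpa [Function.comp_def] using this
      have := hk.tendsto_slope_zero_right
      simpa using this
    have e2 : Tendsto (fun h : ℝ => ‖h⁻¹ • (W (t - h) - W t) + F t‖) (𝓝[>] 0) (𝓝 0) := by
      have hk : HasDerivAt (fun h : ℝ => W (t - h)) (-F t) 0 := by
        have := HasDerivAt.scomp (h := fun h : ℝ => t - h) (x := 0) (g₁ := W) (g₁' := F t)
          (h' := -1) (by simpa using hWD) ((hasDerivAt_id (0:ℝ)).const_sub t)
        simpa [Function.comp_def] using this
      have := (hk.tendsto_slope_zero_right.add_const (F t)).norm
      simpa using this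
    have e3 := (e1.neg).sub e2
    simp only [neg_neg, sub_zero] at e3
    refine le_of_tendsto e3 ?_
    filter_upwards [self_mem_nhdsWithin] with h (hh : 0 < h)
    have hdd := hd t (Ioo_subset_Ioc_self ht) h hh.le
    have : ‖W t - h • F t‖ ≤ ‖W (t - h)‖ + h * ‖h⁻¹ • (W (t - h) - W t) + F t‖ := by
      have e : W t - h • F t = W (t - h) - h • (h⁻¹ • (W (t - h) - W t) + F t) := by
        rw [smul_add, smul_inv_smul₀ hh.ne']; abel
      rw [e]
      refine (norm_sub_le _ _).trans ?_
      rw [norm_smul, Real.norm_of_nonneg hh.le]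
    have h3 : n t - n (t - h) - h * ‖h⁻¹ • (W (t - h) - W t) + F t‖ ≤ h * g t := by
      simp only [hn]; linarith
    have h4 := mul_le_mul_of_nonneg_left h3 (inv_nonneg.2 hh.le)
    rw [inv_mul_cancel_left₀ hh.ne', mul_sub, inv_mul_cancel_left₀ hh.ne'] at h4
    simp only [smul_eq_mul]
    linarith
  have := hac.integral_deriv_eq_sub
  have hle : ∫ s in (0:ℝ)..T, deriv n s ≤ ∫ s in (0:ℝ)..T, g s := by
    apply intervalIntegral.integral_mono_ae_restrict hT hac.intervalIntegrable_deriv hg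
    rw [← restrict_Ioo_eq_restrict_Icc]
    exact (ae_restrict_iff' measurableSet_Ioo).2 hae
  simp only [hn] at this
  linarith

open Filter Topology in
lemma ap_second_diff {E : Type*} [NormedAddCommGroup E] [NormedSpace ℝ E]
    (z z' : ℝ → E) (z'' : E) (h1 : ∀ r, HasDerivAt z (z' r) r) (h2 : HasDerivAt z' z'' 0) :
    Tendsto (fun δ : ℝ => (δ ^ 2)⁻¹ • (z δ + z (-δ) - (2:ℝ) • z 0)) (𝓝[>] 0) (𝓝 z'') := by
  rw [Metric.tendsto_nhdsWithin_nhds]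
  intro ε hε
  have h3 := h2.isLittleO
  rw [Asymptotics.isLittleO_iff] at h3
  have h4 := h3 (half_pos hε |> half_pos)
  rw [Metric.eventually_nhds_iff] at h4
  obtain ⟨η, hη, h4⟩ := h4
  refine ⟨η, hη, ?_⟩
  intro δ (hδ : 0 < δ) hδη
  have hδη : δ < η := by simpa [abs_of_pos hδ] using hδη
  set k : ℝ → E := fun r => z r + z (-r) - (r ^ 2) • z'' with hk
  have hkd : ∀ r, HasDerivAt k (z' r - z' (-r) - (2 * r) • z'') r := by
    intro r
    have a1 : HasDerivAt (fun r => z (-r)) (-z' (-r)) r := by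
      have := HasDerivAt.scomp r (h1 (-r)) (hasDerivAt_neg r)
      simpa [Function.comp_def] using this
    have a2 : HasDerivAt (fun r : ℝ => (r ^ 2) • z'') ((2 * r) • z'') r := by
      have := (hasDerivAt_pow 2 r).smul_const z''
      simpa using this
    have := ((h1 r).add a1).sub a2
    rw [← sub_eq_add_neg] at this
    exact this
  have hb : ∀ r ∈ Icc (0:ℝ) δ, ‖z' r - z' (-r) - (2 * r) • z''‖ ≤ (ε / 2) * δ := by
    intro r hr
    have b1 := @h4 r (by simp [abs_of_nonneg hr.1]; linarith [hr.2])
    have b2 := @h4 (-r) (by simp [abs_of_nonneg hr.1]; linarith [hr.2])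
    simp only [sub_zero, norm_neg, Real.norm_of_nonneg hr.1] at b1 b2
    have e : z' r - z' (-r) - (2 * r) • z'' = (z' r - z' 0 - r • z'') - (z' (-r) - z' 0 - (-r) • z'') := by
      rw [neg_smul, two_mul, add_smul]; abel
    rw [e]
    refine (norm_sub_le _ _).trans ?_
    have := mul_le_mul_of_nonneg_left hr.2 hε.le
    linarith
  have hm := (convex_Icc (0:ℝ) δ).norm_image_sub_le_of_norm_hasDerivWithin_le
    (fun r _ => (hkd r).hasDerivWithinAt) hb (left_mem_Icc.2 hδ.le) (right_mem_Icc.2 hδ.le)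
  rw [dist_eq_norm]
  have e : (δ ^ 2)⁻¹ • (z δ + z (-δ) - (2:ℝ) • z 0) - z'' = (δ ^ 2)⁻¹ • (k δ - k 0) := by
    have : z'' = (δ ^ 2)⁻¹ • (δ ^ 2 • z'') := by rw [inv_smul_smul₀ (by positivity)]
    conv_lhs => rw [this]
    rw [← smul_sub]
    simp only [hk, two_smul]
    congr 1
    simp
    abel
  rw [e, norm_smul, norm_inv, Real.norm_of_nonneg (sq_nonneg δ)]
  rw [sub_zero, Real.norm_of_nonneg hδ.le] at hm
  calc (δ ^ 2)⁻¹ * ‖k δ - k 0‖ ≤ (δ ^ 2)⁻¹ * (ε / 2 * δ * δ) := by gcongr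
    _ = ε / 2 := by field_simp
    _ < ε := by linarith

open Filter Topology in
lemma ap_dissip {E ι : Type*} [Fintype ι] [NormedAddCommGroup E] [NormedSpace ℝ E]
    (z z' : ι → ℝ → E) (z'' : ι → E) (w : E) (h1 : ∀ k r, HasDerivAt (z k) (z' k r) r)
    (h2 : ∀ k, HasDerivAt (z' k) (z'' k) 0) (h0 : ∀ k, z k 0 = w)
    (hn : ∀ k r, ‖z k r‖ ≤ ‖w‖) (h : ℝ) (hh : 0 ≤ h) :
    ‖w‖ ≤ ‖w - h • ∑ k, z'' k‖ := by
  have ht : Tendsto (fun δ : ℝ => ‖w - h • ∑ k, (δ ^ 2)⁻¹ • (z k δ + z k (-δ) - (2:ℝ) • z k 0)‖)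
      (𝓝[>] 0) (𝓝 ‖w - h • ∑ k, z'' k‖) := by
    refine (Tendsto.const_sub _ (Tendsto.const_smul ?_ h)).norm
    exact tendsto_finsetSum _ fun k _ => ap_second_diff _ _ _ (h1 k) (h2 k)
  refine ge_of_tendsto ht ?_
  filter_upwards [self_mem_nhdsWithin] with δ (hδ : 0 < δ)
  set c := h * (δ ^ 2)⁻¹ with hc
  have hc0 : 0 ≤ c := by positivity
  have e : w = (w - h • ∑ k, (δ ^ 2)⁻¹ • (z k δ + z k (-δ) - (2:ℝ) • z k 0))
      + (c • (∑ k, (z k δ + z k (-δ))) - (c * 2 * Fintype.card ι) • w) := by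
    simp only [h0, ← Finset.smul_sum, Finset.sum_sub_distrib, smul_sub, smul_smul, hc]
    simp only [Finset.sum_const, Finset.card_univ, smul_smul, ← Nat.cast_smul_eq_nsmul ℝ]
    rw [show h * ((δ ^ 2)⁻¹ * 2) * (Fintype.card ι : ℝ) = h * (δ ^ 2)⁻¹ * 2 * (Fintype.card ι : ℝ) by ring]
    abel
  set X := (w - h • ∑ k, (δ ^ 2)⁻¹ • (z k δ + z k (-δ) - (2:ℝ) • z k 0)) with hX
  have hs : ‖∑ k, (z k δ + z k (-δ))‖ ≤ 2 * Fintype.card ι * ‖w‖ := by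
    refine (norm_sum_le _ _).trans ?_
    calc ∑ k, ‖z k δ + z k (-δ)‖ ≤ ∑ k : ι, 2 * ‖w‖ := by
          apply Finset.sum_le_sum
          intro k _
          refine (norm_add_le _ _).trans ?_
          linarith [hn k δ, hn k (-δ)]
      _ = _ := by simp; ring
  have e' : (1 + c * 2 * Fintype.card ι) • w = X + c • (∑ k, (z k δ + z k (-δ))) := by
    rw [add_smul, one_smul]
    nth_rewrite 1 [e]
    abel
  have hN := congrArg norm e'
  rw [norm_smul, Real.norm_of_nonneg (by positivity)] at hN
  have := norm_add_le X (c • (∑ k, (z k δ + z k (-δ))))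
  rw [norm_smul, Real.norm_of_nonneg hc0] at this
  have := mul_le_mul_of_nonneg_left hs hc0
  nlinarith
section Translation

variable {d : ℕ} {p : ℝ≥0∞} [Fact (1 ≤ p)]

/-- translation `u(· - z)` on `L_p` -/
noncomputable def apTau (z : Fin d → ℝ) (u : Lp ℝ p (volume : Measure (Fin d → ℝ))) :
    Lp ℝ p (volume : Measure (Fin d → ℝ)) := DomAddAct.mk (-z) +ᵥ u

lemma apTau_ae (z : Fin d → ℝ) (u : Lp ℝ p (volume : Measure (Fin d → ℝ))) :
    apTau z u =ᵐ[volume] fun x => u (x - z) := by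
  have := DomAddAct.vadd_Lp_ae_eq (DomAddAct.mk (-z)) u
  filter_upwards [this] with x hx
  rw [apTau, hx]
  simp [sub_eq_neg_add]

lemma apTau_zero (u : Lp ℝ p (volume : Measure (Fin d → ℝ))) : apTau 0 u = u := by
  simp [apTau]

lemma apTau_apTau (z w : Fin d → ℝ) (u : Lp ℝ p (volume : Measure (Fin d → ℝ))) :
    apTau z (apTau w u) = apTau (z + w) u := by
  simp only [apTau, vadd_vadd, neg_add]
  congr 1
  rw [← DomAddAct.mk_add, add_comm]

/-- translation as a linear isometry -/
noncomputable def apTauL (z : Fin d → ℝ) : Lp ℝ p (volume : Measure (Fin d → ℝ)) →ₗᵢ[ℝ]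
    Lp ℝ p (volume : Measure (Fin d → ℝ)) where
  toFun := apTau z
  map_add' u v := DomAddAct.vadd_Lp_add _ u v
  map_smul' c u := by
    ext1
    simp only [RingHom.id_apply]
    have h1 := apTau_ae z (c • u)
    have h2 := apTau_ae z u
    have h3 := Lp.coeFn_smul c (apTau z u)
    have h4 := (measurePreserving_sub_right (volume : Measure (Fin d → ℝ)) z).quasiMeasurePreserving.ae_eq_comp
      (Lp.coeFn_smul c u)
    filter_upwards [h1, h2, h3, h4] with x e1 e2 e3 e4
    simp only [Function.comp_apply, Pi.smul_apply] at e4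
    rw [e1, e3, Pi.smul_apply, e2, e4]
  norm_map' u := DomAddAct.norm_vadd_Lp _ u

lemma apTauL_apply (z : Fin d → ℝ) (u : Lp ℝ p (volume : Measure (Fin d → ℝ))) :
    apTauL z u = apTau z u := rfl

lemma norm_apTau (z : Fin d → ℝ) (u : Lp ℝ p (volume : Measure (Fin d → ℝ))) :
    ‖apTau z u‖ = ‖u‖ := (apTauL z).norm_map u

lemma continuous_apTau [Fact (p ≠ ∞)] (u : Lp ℝ p (volume : Measure (Fin d → ℝ))) :
    Continuous fun z => apTau z u := by
  unfold apTau
  have h : Continuous fun z : Fin d → ℝ => (DomAddAct.mk (-z) : DomAddAct (Fin d → ℝ)) :=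
    DomAddAct.continuous_mk.comp continuous_neg
  exact h.vadd continuous_const

open scoped Convolution Pointwise

/-- the mollification -/
noncomputable def apV (g : (Fin d → ℝ) → ℝ) (u : Lp ℝ p (volume : Measure (Fin d → ℝ))) (x : Fin d → ℝ) :
    Lp ℝ p (volume : Measure (Fin d → ℝ)) := ∫ y, g y • apTau (x - y) u

lemma apV_eq (g : (Fin d → ℝ) → ℝ) (u : Lp ℝ p (volume : Measure (Fin d → ℝ))) :
    apV g u = (g ⋆[ContinuousLinearMap.lsmul ℝ ℝ, volume] fun z => apTau z u) := by
  ext1 x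
  simp [apV, convolution_def]

lemma apV_integrable [Fact (p ≠ ∞)] {g : (Fin d → ℝ) → ℝ} (hg : Continuous g)
    (hc : HasCompactSupport g)
    (u : Lp ℝ p (volume : Measure (Fin d → ℝ))) (x : Fin d → ℝ) :
    Integrable fun y => g y • apTau (x - y) u := by
  apply Continuous.integrable_of_hasCompactSupport
  · exact hg.smul ((continuous_apTau u).comp (continuous_const.sub continuous_id))
  · exact hc.smul_right

lemma apV_shift [Fact (p ≠ ∞)] {g : (Fin d → ℝ) → ℝ} (hg : Continuous g)
    (hc : HasCompactSupport g)
    (u : Lp ℝ p (volume : Measure (Fin d → ℝ))) (x : Fin d → ℝ) :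
    apV g u x = apTau x (apV g u 0) := by
  rw [← apTauL_apply, apV, apV]
  have := (apTauL (p := p) x).toContinuousLinearMap.integral_comp_comm (apV_integrable hg hc u 0)
  simp only [LinearIsometry.coe_toContinuousLinearMap] at this
  rw [← this]
  congr 1
  ext1 y
  rw [map_smul, apTauL_apply, apTau_apTau]
  simp [sub_eq_add_neg]

lemma norm_apV [Fact (p ≠ ∞)] {g : (Fin d → ℝ) → ℝ} (hg : Continuous g)
    (hc : HasCompactSupport g)
    (u : Lp ℝ p (volume : Measure (Fin d → ℝ))) (x : Fin d → ℝ) :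
    ‖apV g u x‖ = ‖apV g u 0‖ := by
  rw [apV_shift hg hc, norm_apTau]

lemma apV_bound [Fact (p ≠ ∞)] (g : (Fin d → ℝ) → ℝ)
    (u : Lp ℝ p (volume : Measure (Fin d → ℝ))) (x : Fin d → ℝ) :
    ‖apV g u x‖ ≤ (∫ y, ‖g y‖) * ‖u‖ := by
  refine (norm_integral_le_integral_norm _).trans (le_of_eq ?_)
  rw [← integral_mul_const]
  congr 1
  ext1 y
  rw [norm_smul, norm_apTau]

/-- mollification as an operator -/
lemma apV_clm [Fact (p ≠ ∞)] {g : (Fin d → ℝ) → ℝ} (hg : Continuous g)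
    (hc : HasCompactSupport g) :
    ∃ C : Lp ℝ p (volume : Measure (Fin d → ℝ)) →L[ℝ] Lp ℝ p (volume : Measure (Fin d → ℝ)),
      ∀ u, C u = apV g u 0 := by
  refine ⟨LinearMap.mkContinuous { toFun := fun u => apV g u 0, map_add' := ?_, map_smul' := ?_ }
    (∫ y, ‖g y‖) (fun u => apV_bound g u 0), fun u => rfl⟩
  · intro u v
    simp only [apV]
    rw [← integral_add (apV_integrable hg hc u 0) (apV_integrable hg hc v 0)]
    congr 1
    ext1 y
    rw [← apTauL_apply, map_add, smul_add]
    rfl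
  · intro c u
    simp only [apV]
    rw [RingHom.id_apply, ← integral_smul]
    congr 1
    ext1 y
    rw [← apTauL_apply, map_smul, smul_comm]
    rfl

lemma apV_hasDerivAt [Fact (p ≠ ∞)] {g : (Fin d → ℝ) → ℝ} (hg : ContDiff ℝ 1 g)
    (hc : HasCompactSupport g)
    (u : Lp ℝ p (volume : Measure (Fin d → ℝ))) (b : Fin d → ℝ) (r : ℝ) :
    HasDerivAt (fun r : ℝ => apV g u (r • b)) (apV (fun x => fderiv ℝ g x b) u (r • b)) r := by
  have hl : LocallyIntegrable (fun z => apTau z u) (volume : Measure (Fin d → ℝ)) :=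
    (continuous_apTau u).locallyIntegrable
  have h := hc.hasFDerivAt_convolution_left (ContinuousLinearMap.lsmul ℝ ℝ) hg hl (r • b)
  rw [← apV_eq] at h
  have hr : HasDerivAt (fun r : ℝ => r • b) b r := by
    simpa using (hasDerivAt_id r).smul_const b
  have h2 := h.comp_hasDerivAt r hr
  refine h2.congr_deriv ?_
  rw [apV, convolution_def, ContinuousLinearMap.integral_apply]
  · simp
  · exact (hc.fderiv ℝ).convolutionExists_left _ (hg.continuous_fderiv one_ne_zero) hl _

lemma apV_tendsto [Fact (p ≠ ∞)] {ι : Type*} {φ : ι → ContDiffBump (0 : Fin d → ℝ)}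
    {l : Filter ι}
    (hφ : Filter.Tendsto (fun i => (φ i).rOut) l (nhds 0))
    (u : Lp ℝ p (volume : Measure (Fin d → ℝ))) :
    Filter.Tendsto (fun i => apV ((φ i).normed volume) u 0) l (nhds u) := by
  have := ContDiffBump.convolution_tendsto_right_of_continuous (μ := volume) hφ (continuous_apTau u) 0
  simp only [apTau_zero] at this
  simpa only [apV_eq] using this

lemma ap_pairing [Fact (p ≠ ∞)] {φ : (Fin d → ℝ) → ℝ} (hφ : Continuous φ)
    (hc : HasCompactSupport φ) :
    ∃ Φ : Lp ℝ p (volume : Measure (Fin d → ℝ)) →L[ℝ] ℝ, ∀ u, Φ u = ∫ x, u x * φ x := by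
  have : Fact (1 ≤ (1 - p⁻¹)⁻¹) := by simp [fact_iff]
  have hpq : ENNReal.HolderConjugate p (1 - p⁻¹)⁻¹ :=
      ENNReal.HolderConjugate.inv_one_sub_inv' (Fact.out)
  have hm : MemLp φ (1 - p⁻¹)⁻¹ (volume : Measure (Fin d → ℝ)) :=
    hφ.memLp_of_hasCompactSupport hc
  refine ⟨((ContinuousLinearMap.mul ℝ ℝ).lpPairing volume p (1 - p⁻¹)⁻¹).flip hm.toLp, fun u => ?_⟩
  rw [ContinuousLinearMap.flip_apply, ContinuousLinearMap.lpPairing_eq_integral]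
  apply integral_congr_ae
  filter_upwards [hm.coeFn_toLp] with x hx
  simp [hx]

lemma ap_fubini [Fact (p ≠ ∞)] {g φ : (Fin d → ℝ) → ℝ} (hg : Continuous g)
    (hgc : HasCompactSupport g) (hφ : Continuous φ) (hc : HasCompactSupport φ)
    (u : Lp ℝ p (volume : Measure (Fin d → ℝ))) :
    ∫ x, (apV g u 0) x * φ x
      = ∫ x, u x * (g ⋆[ContinuousLinearMap.mul ℝ ℝ, volume] φ) x := by
  obtain ⟨Φ, hΦ⟩ := ap_pairing (p := p) hφ hc
  have hloc : LocallyIntegrable u (volume : Measure (Fin d → ℝ)) :=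
    (Lp.memLp u).locallyIntegrable Fact.out
  rw [← hΦ, apV, ← Φ.integral_comp_comm (apV_integrable hg hgc u 0)]
  have e1 : ∀ y, Φ (g y • apTau (0 - y) u) = ∫ x, u x * (g y * φ (x - y)) := by
    intro y
    rw [map_smul, hΦ, smul_eq_mul, ← integral_const_mul]
    rw [← integral_sub_right_eq_self _ y]
    apply integral_congr_ae
    have := (measurePreserving_sub_right (volume : Measure (Fin d → ℝ)) y).quasiMeasurePreserving.ae_eq_comp
      (apTau_ae (0 - y) u)
    filter_upwards [this] with x hx
    simp only [Function.comp_apply] at hx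
    rw [hx]
    simp
    ring
  simp_rw [e1]
  rw [integral_integral_swap]
  · congr 1
    ext1 x
    rw [convolution_def, ← integral_const_mul]
    simp
  · -- integrability on product
    obtain ⟨M, hM⟩ := hc.exists_bound_of_continuous hφ
    set K : Set (Fin d → ℝ) := tsupport φ + tsupport g with hK
    have hKc : IsCompact K := hc.isCompact.add hgc.isCompact
    have hi1 : Integrable (K.indicator u) (volume : Measure (Fin d → ℝ)) :=
      (integrable_indicator_iff hKc.measurableSet).2 (hloc.integrableOn_isCompact hKc)
    have hi2 : Integrable g (volume : Measure (Fin d → ℝ)) :=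
      hg.integrable_of_hasCompactSupport hgc
    have hi := (hi2.mul_prod hi1).bdd_mul (f := fun z : (Fin d → ℝ) × (Fin d → ℝ) => φ (z.2 - z.1)) (c := M)
      (by
        apply Continuous.aestronglyMeasurable
        exact hφ.comp (continuous_snd.sub continuous_fst))
      (Filter.Eventually.of_forall fun z => hM _)
    refine hi.congr (Filter.Eventually.of_forall fun z => ?_)
    simp only [Function.uncurry]
    by_cases hz : z.2 ∈ K
    · rw [indicator_of_mem hz]; ring
    · rw [indicator_of_notMem hz]
      by_cases h1 : φ (z.2 - z.1) = 0
      · simp [h1]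
      by_cases h2 : g z.1 = 0
      · simp [h2]
      exfalso
      apply hz
      exact ⟨z.2 - z.1, subset_tsupport _ h1, z.1, subset_tsupport _ h2, by simp⟩

lemma pd_contDiff {φ : (Fin d → ℝ) → ℝ} (hφ : ContDiff ℝ (⊤ : ℕ∞) φ) (i : Fin d) :
    ContDiff ℝ (⊤ : ℕ∞) (pd i φ) := by
  unfold pd
  have : ContDiff ℝ (⊤ : ℕ∞) (fderiv ℝ φ) := hφ.fderiv_right (by simp)
  exact this.clm_apply contDiff_const

lemma pd_compact {φ : (Fin d → ℝ) → ℝ} (hφ : HasCompactSupport φ) (i : Fin d) :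
    HasCompactSupport (pd i φ) := by
  unfold pd
  exact hφ.fderiv_apply (𝕜 := ℝ) _

lemma pd_conv {g φ : (Fin d → ℝ) → ℝ} (hg : ContDiff ℝ (⊤ : ℕ∞) g)
    (hgc : HasCompactSupport g) (hφ : Continuous φ) (i : Fin d) :
    pd i (g ⋆[ContinuousLinearMap.mul ℝ ℝ, volume] φ)
      = (pd i g ⋆[ContinuousLinearMap.mul ℝ ℝ, volume] φ) := by
  ext1 x
  have hl : LocallyIntegrable φ (volume : Measure (Fin d → ℝ)) := hφ.locallyIntegrable
  have h := hgc.hasFDerivAt_convolution_left (ContinuousLinearMap.mul ℝ ℝ)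
    (hg.of_le (by exact_mod_cast le_top)) hl x
  rw [pd, h.fderiv, convolution_def, convolution_def, ContinuousLinearMap.integral_apply]
  · simp [pd]
  · exact (hgc.fderiv ℝ).convolutionExists_left _ (hg.continuous_fderiv (by simp)) hl _

end Translation
section Step

variable {d : ℕ} {p : ℝ≥0∞} [Fact (1 ≤ p)]

open scoped MatrixOrder in
lemma ap_psd (a : Fin d → Fin d → ℝ) (hs : ∀ i j, a i j = a j i)
    (hp : ∀ ξ : Fin d → ℝ, 0 ≤ ∑ i, ∑ j, a i j * ξ i * ξ j) :
    ∃ b : Fin d → Fin d → ℝ, ∀ i j, a i j = ∑ k, b k i * b k j := by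
  have hA : (Matrix.of a).PosSemidef := by
    apply Matrix.PosSemidef.of_dotProduct_mulVec_nonneg
    · ext i j
      simp [hs i j]
    · intro ξ
      have := hp ξ
      simp only [dotProduct, Matrix.mulVec, Pi.star_apply, star_trivial, Matrix.of_apply,
        Finset.mul_sum]
      refine this.trans (le_of_eq ?_)
      refine Finset.sum_congr rfl fun i _ => Finset.sum_congr rfl fun j _ => ?_
      ring
  obtain ⟨B, hB⟩ := CStarAlgebra.nonneg_iff_eq_star_mul_self.mp hA.nonneg
  refine ⟨B, fun i j => ?_⟩
  have := congrFun (congrFun hB i) j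
  simpa [Matrix.mul_apply] using this

lemma ap_fderiv_eq (φ : (Fin d → ℝ) → ℝ) (b : Fin d → ℝ) :
    (fun x => fderiv ℝ φ x b) = fun x => ∑ i, b i * pd i φ x := by
  ext1 x
  have hb : b = ∑ i, b i • (Pi.single i (1:ℝ) : Fin d → ℝ) := by
    ext j
    simp [Finset.sum_apply, Pi.single_apply]
  conv_lhs => rw [hb]
  simp [pd]

lemma ap_fderiv2_eq {φ : (Fin d → ℝ) → ℝ} (hφ : ContDiff ℝ (⊤ : ℕ∞) φ) (b : Fin d → ℝ) :
    (fun x => fderiv ℝ (fun y => fderiv ℝ φ y b) x b)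
      = fun x => ∑ i, ∑ j, (b i * b j) * pd i (pd j φ) x := by
  rw [ap_fderiv_eq]
  ext1 x
  apply Finset.sum_congr rfl
  intro i _
  rw [ap_fderiv_eq]
  have hd : ∀ j, DifferentiableAt ℝ (pd j φ) x := fun j =>
    ((pd_contDiff hφ j).differentiable (by simp)).differentiableAt
  have : pd i (fun x => ∑ j, b j * pd j φ x) x = ∑ j, b j * pd i (pd j φ) x := by
    have e : pd i (fun x => ∑ j, b j * pd j φ x) x
        = fderiv ℝ (fun x => ∑ j, b j * pd j φ x) x (Pi.single i 1) := rfl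
    rw [e, fderiv_fun_sum (fun j _ => (hd j).const_mul (b j))]
    rw [ContinuousLinearMap.sum_apply]
    apply Finset.sum_congr rfl
    intro j _
    rw [fderiv_const_mul (hd j) (b j)]
    rfl
  rw [this, Finset.mul_sum]
  apply Finset.sum_congr rfl
  intro j _
  ring

lemma ap_step [Fact (p ≠ ∞)] {ρ : (Fin d → ℝ) → ℝ} (hρ : ContDiff ℝ (⊤ : ℕ∞) ρ)
    (hc : HasCompactSupport ρ) (a : Fin d → Fin d → ℝ) (hs : ∀ i j, a i j = a j i)
    (hp : ∀ ξ : Fin d → ℝ, 0 ≤ ∑ i, ∑ j, a i j * ξ i * ξ j)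
    (u : Lp ℝ p (volume : Measure (Fin d → ℝ))) (h : ℝ) (hh : 0 ≤ h) :
    ‖apV ρ u 0‖ ≤ ‖apV ρ u 0 - h • ∑ i, ∑ j, a i j • apV (pd i (pd j ρ)) u 0‖ := by
  obtain ⟨b, hb⟩ := ap_psd a hs hp
  have h1c : ∀ b : Fin d → ℝ, ContDiff ℝ (⊤ : ℕ∞) (fun y => fderiv ℝ ρ y b) := by
    intro b
    have : ContDiff ℝ (⊤ : ℕ∞) (fderiv ℝ ρ) := hρ.fderiv_right (by simp)
    exact this.clm_apply contDiff_const
  have h1s : ∀ b : Fin d → ℝ, HasCompactSupport (fun y => fderiv ℝ ρ y b) := fun b =>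
    hc.fderiv_apply (𝕜 := ℝ) _
  have key := ap_dissip (fun k r => apV ρ u (r • b k))
    (fun k r => apV (fun y => fderiv ℝ ρ y (b k)) u (r • b k))
    (fun k => apV (fun x => fderiv ℝ (fun y => fderiv ℝ ρ y (b k)) x (b k)) u ((0:ℝ) • b k))
    (apV ρ u 0)
    (fun k r => apV_hasDerivAt (hρ.of_le (by exact_mod_cast le_top)) hc u (b k) r)
    (fun k => apV_hasDerivAt ((h1c (b k)).of_le (by exact_mod_cast le_top)) (h1s (b k)) u (b k) 0)
    (fun k => by simp) (fun k r => (norm_apV hρ.continuous hc u _).le) h hh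
  refine key.trans (le_of_eq ?_)
  congr 3
  have e : ∀ k, apV (fun x => fderiv ℝ (fun y => fderiv ℝ ρ y (b k)) x (b k)) u ((0:ℝ) • b k)
      = ∑ i, ∑ j, (b k i * b k j) • apV (pd i (pd j ρ)) u 0 := by
    intro k
    have hint : ∀ i j, Integrable (fun y => ((b k i * b k j) * pd i (pd j ρ) y) • apTau (0 - y) u)
        := by
      intro i j
      have := (apV_integrable (pd_contDiff (pd_contDiff hρ j) i).continuous
        (pd_compact (pd_compact hc j) i) u 0).smul (b k i * b k j)
      refine this.congr (Filter.Eventually.of_forall fun y => ?_)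
      simp [smul_smul]
    rw [ap_fderiv2_eq hρ, zero_smul, apV]
    simp only [Finset.sum_smul]
    rw [integral_finsetSum _ (fun i _ => integrable_finsetSum _ fun j _ => hint i j)]
    apply Finset.sum_congr rfl
    intro i _
    rw [integral_finsetSum _ (fun j _ => hint i j)]
    apply Finset.sum_congr rfl
    intro j _
    simp only [mul_smul _ (pd i (pd j ρ) _)]
    rw [integral_smul, apV]
  simp only [e, hb, Finset.sum_smul]
  rw [Finset.sum_comm]
  apply Finset.sum_congr rfl
  intro i _
  rw [Finset.sum_comm]

lemma ap_ext {v w : Lp ℝ p (volume : Measure (Fin d → ℝ))}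
    (h : ∀ φ : (Fin d → ℝ) → ℝ, ContDiff ℝ (⊤ : ℕ∞) φ → HasCompactSupport φ →
      ∫ x, v x * φ x = ∫ x, w x * φ x) : v = w := by
  ext1
  apply ae_eq_of_integral_contDiff_smul_eq ((Lp.memLp v).locallyIntegrable Fact.out)
    ((Lp.memLp w).locallyIntegrable Fact.out)
  intro φ h1 h2
  simpa [mul_comm] using h φ h1 h2

lemma ap_aMax (a : ℝ → Fin d → Fin d → ℝ) (t : ℝ) (i j : Fin d) : |a t i j| ≤ aMax a t := by
  unfold aMax
  refine le_trans ?_ (le_ciSup (Set.finite_range _).bddAbove i)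
  exact le_ciSup (f := fun j => |a t i j|) (Set.finite_range _).bddAbove j

end Step
section Final

variable {d : ℕ} {p : ℝ≥0∞} [Fact (1 ≤ p)]

open scoped Convolution in
lemma ap_moll [Fact (p ≠ ∞)] {ρ : (Fin d → ℝ) → ℝ} (hρ : ContDiff ℝ (⊤ : ℕ∞) ρ)
    (hc : HasCompactSupport ρ) (T : ℝ) (a : ℝ → Fin d → Fin d → ℝ)
    (ham : ∀ i j, Measurable fun t => a t i j)
    (has : ∀ t ∈ Ioc (0:ℝ) T, ∀ i j, a t i j = a t j i)
    (hap : ∀ t ∈ Ioc (0:ℝ) T, ∀ ξ : Fin d → ℝ, 0 ≤ ∑ i, ∑ j, a t i j * ξ i * ξ j)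
    (u0 : Lp ℝ p (volume : Measure (Fin d → ℝ)))
    (f u : ℝ → Lp ℝ p (volume : Measure (Fin d → ℝ)))
    (hf : IntegrableOn f (Ioc (0:ℝ) T))
    (hw : IsWeakSolution p T a u0 f u)
    (hu : ContinuousOn u (Icc (0:ℝ) T))
    (hau : IntegrableOn (fun t => aMax a t * ‖u t‖) (Ioc (0:ℝ) T))
    (t : ℝ) (ht : t ∈ Icc (0:ℝ) T) :
    ‖apV ρ (u t) 0‖ ≤ ‖apV ρ u0 0‖ + ∫ s in Ioc (0:ℝ) t, ‖apV ρ (f s) 0‖ := by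
  have h2d : ∀ i j, ContDiff ℝ (⊤ : ℕ∞) (pd i (pd j ρ)) := fun i j =>
    pd_contDiff (pd_contDiff hρ j) i
  have h2c : ∀ i j, HasCompactSupport (pd i (pd j ρ)) := fun i j =>
    pd_compact (pd_compact hc j) i
  obtain ⟨C, hC⟩ := apV_clm (p := p) hρ.continuous hc
  choose D hD using fun i j => apV_clm (p := p) (h2d i j).continuous (h2c i j)
  set G : ℝ → Lp ℝ p (volume : Measure (Fin d → ℝ)) :=
    fun s => ∑ i, ∑ j, a s i j • D i j (u s) with hG
  set F : ℝ → Lp ℝ p (volume : Measure (Fin d → ℝ)) := fun s => G s + C (f s) with hF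
  have hum : AEStronglyMeasurable u (volume.restrict (Ioc (0:ℝ) T)) :=
    (hu.mono Ioc_subset_Icc_self).aestronglyMeasurable measurableSet_Ioc
  have hGij : ∀ i j, IntegrableOn (fun s => a s i j • D i j (u s)) (Ioc (0:ℝ) T) := by
    intro i j
    refine Integrable.mono' (hau.const_mul ‖D i j‖) ?_ ?_
    · exact (ham i j).aestronglyMeasurable.smul ((D i j).continuous.comp_aestronglyMeasurable hum)
    · refine Filter.Eventually.of_forall fun s => ?_
      rw [norm_smul, Real.norm_eq_abs]
      calc |a s i j| * ‖D i j (u s)‖ ≤ aMax a s * (‖D i j‖ * ‖u s‖) := by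
            apply mul_le_mul (ap_aMax a s i j) ((D i j).le_opNorm _) (norm_nonneg _)
            exact (abs_nonneg _).trans (ap_aMax a s i j)
        _ = _ := by ring
  have hGi : IntegrableOn G (Ioc (0:ℝ) T) :=
    integrable_finsetSum _ fun i _ => integrable_finsetSum _ fun j _ => hGij i j
  have hCf : IntegrableOn (fun s => C (f s)) (Ioc (0:ℝ) T) := C.integrable_comp hf
  have hFi : IntegrableOn F (Ioc (0:ℝ) T) := hGi.add hCf
  have hsub : ∀ t ∈ Icc (0:ℝ) T, Ioc (0:ℝ) t ⊆ Ioc (0:ℝ) T := fun t ht =>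
    Ioc_subset_Ioc_right ht.2
  have hW : ∀ t ∈ Icc (0:ℝ) T, C (u t) = C u0 + ∫ s in Ioc (0:ℝ) t, F s := by
    intro t ht
    apply ap_ext
    intro φ hφ hφc
    obtain ⟨Φ, hΦ⟩ := ap_pairing (p := p) hφ.continuous hφc
    set ψ := (ρ ⋆[ContinuousLinearMap.mul ℝ ℝ, volume] φ) with hψ
    have hl : LocallyIntegrable φ (volume : Measure (Fin d → ℝ)) :=
      hφ.continuous.locallyIntegrable
    have hψd : ContDiff ℝ (⊤ : ℕ∞) ψ := hc.contDiff_convolution_left _ hρ hl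
    have hψc : HasCompactSupport ψ := hc.convolution _ hφc
    have e0 : ∀ v, Φ (C v) = ∫ x, v x * ψ x := fun v => by
      rw [hΦ, hC, ap_fubini hρ.continuous hc hφ.continuous hφc]
    have e2 : ∀ i j v, Φ (D i j v) = ∫ x, v x * pd i (pd j ψ) x := fun i j v => by
      rw [hΦ, hD, ap_fubini (h2d i j).continuous (h2c i j) hφ.continuous hφc, hψ,
        pd_conv hρ hc hφ.continuous, pd_conv (pd_contDiff hρ j) (pd_compact hc j) hφ.continuous]
    rw [← hΦ, ← hΦ, map_add, e0, e0, hw ψ hψd hψc t ht]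
    congr 1
    rw [← Φ.integral_comp_comm (hFi.mono_set (hsub t ht))]
    congr 1
    ext1 s
    simp only [hF, hG, map_add, map_sum, map_smul, smul_eq_mul, e0, e2]
  have hW0 : C (u 0) = C u0 := by
    have := hW 0 ⟨le_rfl, ht.1.trans ht.2⟩
    simpa using this
  have key := ap_ode (fun t => C (u t)) F (fun s => ‖C (f s)‖) t ht.1
    ((intervalIntegrable_iff_integrableOn_Ioc_of_le ht.1).2 (hFi.mono_set (hsub t ht)))
    ((intervalIntegrable_iff_integrableOn_Ioc_of_le ht.1).2 (hCf.mono_set (hsub t ht)).norm)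
    (by
      intro s hs
      simp only [hW0]
      rw [hW s ⟨hs.1, hs.2.trans ht.2⟩, intervalIntegral.integral_of_le hs.1])
    (by
      intro s hs h hh
      have hs' := hsub t ht hs
      have h1 := ap_step hρ hc (a s) (has s hs') (hap s hs') (u s) h hh
      simp only [← hD, ← hC] at h1
      refine h1.trans ?_
      have e : C (u s) - h • ∑ i, ∑ j, a s i j • D i j (u s)
          = (C (u s) - h • F s) + h • C (f s) := by
        simp only [hF, hG, smul_add]; abel
      rw [e]
      refine (norm_add_le _ _).trans ?_
      rw [norm_smul, Real.norm_of_nonneg hh])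
  simp only [hW0] at key
  rw [intervalIntegral.integral_of_le ht.1] at key
  simpa only [hC] using key

lemma ap_norm [Fact (p ≠ ∞)] (T : ℝ) (a : ℝ → Fin d → Fin d → ℝ)
    (ham : ∀ i j, Measurable fun t => a t i j)
    (has : ∀ t ∈ Ioc (0:ℝ) T, ∀ i j, a t i j = a t j i)
    (hap : ∀ t ∈ Ioc (0:ℝ) T, ∀ ξ : Fin d → ℝ, 0 ≤ ∑ i, ∑ j, a t i j * ξ i * ξ j)
    (u0 : Lp ℝ p (volume : Measure (Fin d → ℝ)))
    (f u : ℝ → Lp ℝ p (volume : Measure (Fin d → ℝ)))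
    (hf : IntegrableOn f (Ioc (0:ℝ) T))
    (hw : IsWeakSolution p T a u0 f u)
    (hu : ContinuousOn u (Icc (0:ℝ) T))
    (hau : IntegrableOn (fun t => aMax a t * ‖u t‖) (Ioc (0:ℝ) T))
    (t : ℝ) (ht : t ∈ Icc (0:ℝ) T) :
    ‖u t‖ ≤ ‖u0‖ + ∫ s in Ioc (0:ℝ) T, ‖f s‖ := by
  let φ : ℕ → ContDiffBump (0 : Fin d → ℝ) := fun n =>
    ⟨1 / (2 * ((n:ℝ) + 1)), 1 / ((n:ℝ) + 1), by positivity, by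
      apply one_div_lt_one_div_of_lt <;> linarith [(n.cast_nonneg : (0:ℝ) ≤ n)]⟩
  have hφ : Filter.Tendsto (fun i => (φ i).rOut) Filter.atTop (nhds 0) :=
    tendsto_one_div_add_atTop_nhds_zero_nat
  refine le_of_tendsto (apV_tendsto hφ (u t)).norm (Filter.Eventually.of_forall fun n => ?_)
  have hρ : ContDiff ℝ (⊤ : ℕ∞) ((φ n).normed volume) := (φ n).contDiff_normed
  have hc : HasCompactSupport ((φ n).normed volume) := (φ n).hasCompactSupport_normed
  have hb : ∀ v : Lp ℝ p (volume : Measure (Fin d → ℝ)),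
      ‖apV ((φ n).normed volume) v 0‖ ≤ ‖v‖ := by
    intro v
    refine (apV_bound _ v 0).trans (le_of_eq ?_)
    have : ∀ y, ‖(φ n).normed volume y‖ = (φ n).normed volume y := fun y =>
      Real.norm_of_nonneg ((φ n).nonneg_normed y)
    simp only [this]
    rw [(φ n).integral_normed, one_mul]
  refine (ap_moll hρ hc T a ham has hap u0 f u hf hw hu hau t ht).trans ?_
  refine add_le_add (hb u0) ?_
  have hsub : Ioc (0:ℝ) t ⊆ Ioc (0:ℝ) T := Ioc_subset_Ioc_right ht.2
  calc ∫ s in Ioc (0:ℝ) t, ‖apV ((φ n).normed volume) (f s) 0‖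
      ≤ ∫ s in Ioc (0:ℝ) t, ‖f s‖ :=
        integral_mono_of_nonneg (Filter.Eventually.of_forall fun _ => norm_nonneg _)
          (hf.mono_set hsub).norm (Filter.Eventually.of_forall fun s => hb (f s))
    _ ≤ _ := setIntegral_mono_set hf.norm (Filter.Eventually.of_forall fun _ => norm_nonneg _)
        hsub.eventuallyLE

end Final

lemma ap_holder (p T : ℝ) (hp : 1 < p) (hT : 0 < T) (g : ℝ → ℝ) (hg0 : ∀ s, 0 ≤ g s)
    (hgm : AEStronglyMeasurable g (volume.restrict (Ioc (0:ℝ) T)))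
    (hg : IntegrableOn (fun s => g s ^ p) (Ioc (0:ℝ) T)) :
    IntegrableOn g (Ioc (0:ℝ) T) ∧
    (∫ s in Ioc (0:ℝ) T, g s) ^ p ≤ T ^ (p - 1) * ∫ s in Ioc (0:ℝ) T, g s ^ p := by
  have hi : IntegrableOn g (Ioc (0:ℝ) T) := by
    have h1 : IntegrableOn (fun _ : ℝ => (1:ℝ)) (Ioc (0:ℝ) T) := integrableOn_const (by simp)
    refine Integrable.mono' (h1.add hg) hgm (Filter.Eventually.of_forall fun s => ?_)
    rw [Real.norm_of_nonneg (hg0 s)]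
    simp only [Pi.add_apply]
    rcases le_total (g s) 1 with h | h
    · linarith [Real.rpow_nonneg (hg0 s) p]
    · linarith [Real.self_le_rpow_of_one_le h hp.le]
  refine ⟨hi, ?_⟩
  have hJ := (convexOn_rpow hp.le).map_set_average_le (t := Ioc (0:ℝ) T) (μ := volume) (f := g)
    (Real.continuous_rpow_const (by linarith)).continuousOn isClosed_Ici
    (by simp [hT]) (by simp) (Filter.Eventually.of_forall fun s => hg0 s) hi hg
  rw [setAverage_eq, setAverage_eq] at hJ
  have hv : (volume : Measure ℝ).real (Ioc (0:ℝ) T) = T := by simp [hT.le]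
  rw [hv, smul_eq_mul, smul_eq_mul] at hJ
  have hn : 0 ≤ ∫ s in Ioc (0:ℝ) T, g s := integral_nonneg fun s => hg0 s
  rw [Real.mul_rpow (inv_nonneg.2 hT.le) hn, Real.inv_rpow hT.le] at hJ
  have hTp : 0 < T ^ p := Real.rpow_pos_of_pos hT p
  have := mul_le_mul_of_nonneg_left hJ hTp.le
  rw [mul_inv_cancel_left₀ hTp.ne'] at this
  rw [Real.rpow_sub_one hT.ne', div_eq_mul_inv, mul_assoc]
  exact this

theorem ap_convex (p : ℝ) (hp : 1 ≤ p) {x y : ℝ} (hx : 0 ≤ x) (hy : 0 ≤ y) :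
    (x + y) ^ p ≤ 2 ^ (p - 1) * (x ^ p + y ^ p) := by
  lift x to NNReal using hx
  lift y to NNReal using hy
  exact_mod_cast NNReal.rpow_add_le_mul_rpow_add_rpow x y hp

theorem a_priori_estimate (p T : ℝ) (hp : 1 < p) (hT : 0 < T)
    [Fact (1 ≤ ENNReal.ofReal p)] :
    ∃ N : ℝ, 0 < N ∧
      ∀ (d : ℕ), 0 < d →
      ∀ (a : ℝ → Fin d → Fin d → ℝ),
        (∀ i j, Measurable fun t => a t i j) →
        (∀ t ∈ Ioc (0:ℝ) T, ∀ i j, a t i j = a t j i) →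
        (∀ t ∈ Ioc (0:ℝ) T, ∀ ξ : Fin d → ℝ,
          0 ≤ ∑ i, ∑ j, a t i j * ξ i * ξ j) →
      ∀ (u0 : Lp ℝ (ENNReal.ofReal p) (volume : Measure (Fin d → ℝ)))
        (f u : ℝ → Lp ℝ (ENNReal.ofReal p) (volume : Measure (Fin d → ℝ))),
        AEStronglyMeasurable f (volume.restrict (Ioc (0:ℝ) T)) →
        IntegrableOn (fun t => ‖f t‖ ^ p) (Ioc (0:ℝ) T) →
        IsWeakSolution (ENNReal.ofReal p) T a u0 f u →
        ContinuousOn u (Icc (0:ℝ) T) →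
        IntegrableOn (fun t => aMax a t * ‖u t‖) (Ioc (0:ℝ) T) →
        ∀ t ∈ Icc (0:ℝ) T,
          ‖u t‖ ^ p ≤ N * (‖u0‖ ^ p + ∫ s in Ioc (0:ℝ) T, ‖f s‖ ^ p) := by
  have hTp : 0 ≤ T ^ (p - 1) := Real.rpow_nonneg hT.le _
  have h2p : (0:ℝ) < 2 ^ (p - 1) := Real.rpow_pos_of_pos two_pos _
  refine ⟨2 ^ (p - 1) * (1 + T ^ (p - 1)), by positivity, ?_⟩
  intro d _ a ham has hap u0 f u hfm hfi hw hu hau t ht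
  have : Fact (ENNReal.ofReal p ≠ ∞) := ⟨ENNReal.ofReal_ne_top⟩
  obtain ⟨h1, h2⟩ := ap_holder p T hp hT (fun s => ‖f s‖) (fun s => norm_nonneg _) hfm.norm hfi
  have hf : IntegrableOn f (Ioc (0:ℝ) T) := (integrable_norm_iff hfm).1 h1
  have h3 := ap_norm T a ham has hap u0 f u hf hw hu hau t ht
  have hn : 0 ≤ ∫ s in Ioc (0:ℝ) T, ‖f s‖ := integral_nonneg fun s => norm_nonneg _
  have hnp : 0 ≤ ∫ s in Ioc (0:ℝ) T, ‖f s‖ ^ p :=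
    integral_nonneg fun s => Real.rpow_nonneg (norm_nonneg _) _
  have hu0 : 0 ≤ ‖u0‖ ^ p := Real.rpow_nonneg (norm_nonneg _) _
  calc ‖u t‖ ^ p ≤ (‖u0‖ + ∫ s in Ioc (0:ℝ) T, ‖f s‖) ^ p :=
        Real.rpow_le_rpow (norm_nonneg _) h3 (by linarith)
    _ ≤ 2 ^ (p - 1) * (‖u0‖ ^ p + (∫ s in Ioc (0:ℝ) T, ‖f s‖) ^ p) :=
        ap_convex p hp.le (norm_nonneg _) hn
    _ ≤ 2 ^ (p - 1) * (‖u0‖ ^ p + T ^ (p - 1) * ∫ s in Ioc (0:ℝ) T, ‖f s‖ ^ p) := by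
        gcongr
    _ ≤ _ := by
        rw [mul_assoc]
        apply mul_le_mul_of_nonneg_left _ h2p.le
        nlinarith [mul_nonneg hTp hu0]

end
end

section
/- Let p ∈ (1,∞), T ∈ (0,∞), u_0 ∈ L_p(ℝ^d), and f ∈ L_p((0,T); L_p(ℝ^d)). Assume additionally that ∫_0^T |a(t)| dt < ∞. Then there exists a unique weak solution u of ∂_t u = a^{ij}(t) u_{x^i x^j} + f, u(0) = u_0, which is continuous from [0,T] into L_p(ℝ^d), and this solution satisfies sup_{t∈[0,T]} ‖u(t,·)‖_{L_p}^p ≤ N ( ‖u_0‖_{L_p}^p + ∫_0^T ‖f(t,·)‖_{L_p}^p dt ), where N depends only on p and T. -/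
open MeasureTheory Set ENNReal

noncomputable section

namespace WP

variable {d : ℕ} {p : ℝ≥0∞} [Fact (1 ≤ p)]

/-- parameter space for translations -/
abbrev F (d : ℕ) := EuclideanSpace ℝ (Fin d)

/-- the Lebesgue space -/
abbrev X (d : ℕ) (p : ℝ≥0∞) := Lp ℝ p (volume : Measure (Fin d → ℝ))

/-- translation -/
def sh (y : F d) : X d p →ₗᵢ[ℝ] X d p :=
  Lp.compMeasurePreservingₗᵢ ℝ (fun x => x + y.ofLp) (measurePreserving_add_right volume _)

lemma coeFn_sh (y : F d) (z : X d p) : (sh y z : (Fin d → ℝ) → ℝ) =ᵐ[volume]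
    fun x => z (x + y.ofLp) :=
  Lp.coeFn_compMeasurePreserving z (measurePreserving_add_right volume y.ofLp)

lemma sh_zero (z : X d p) : sh 0 z = z := by
  apply Lp.ext
  filter_upwards [coeFn_sh 0 z] with x hx
  simpa using hx

lemma sh_add (y y' : F d) (z : X d p) : sh y (sh y' z) = sh (y + y') z := by
  apply Lp.ext
  have h1 := (measurePreserving_add_right volume y.ofLp).quasiMeasurePreserving.ae
    (coeFn_sh y' z)
  filter_upwards [coeFn_sh y (sh y' z), coeFn_sh (y + y') z, h1] with x h2 h3 h4
  rw [h2, h3, h4]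
  simp [add_assoc]

lemma continuous_sh (hp : p ≠ ∞) (z : X d p) : Continuous fun y : F d => sh y z := by
  have hg : Continuous fun y : F d => (ContinuousMap.mk (fun x : Fin d → ℝ => x + y.ofLp)
      (by fun_prop)) := by
    apply ContinuousMap.continuous_of_continuous_uncurry
    simp only [Function.uncurry_def, ContinuousMap.coe_mk]
    fun_prop
  exact (continuous_const (y := z)).compMeasurePreservingLp hg
    (fun y => measurePreserving_add_right volume y.ofLp) hp

/-- test function -/
def IsTest (φ : (Fin d → ℝ) → ℝ) : Prop := ContDiff ℝ (⊤ : ℕ∞) φ ∧ HasCompactSupport φ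

lemma IsTest.pd {φ : (Fin d → ℝ) → ℝ} (h : IsTest φ) (i : Fin d) : IsTest (pd i φ) := by
  refine ⟨?_, h.2.fderiv_apply ℝ _⟩
  have := h.1.fderiv_right (m := (⊤ : ℕ∞)) (by simp)
  exact this.clm_apply contDiff_const

lemma exists_pairing {φ : (Fin d → ℝ) → ℝ} (h : IsTest φ) :
    ∃ L : X d p →L[ℝ] ℝ, ∀ z : X d p, L z = ∫ x, z x * φ x := by
  have hφ : MemLp φ ((1 - p⁻¹)⁻¹) volume :=
    h.1.continuous.memLp_of_hasCompactSupport h.2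
  have : HolderConjugate p ((1 - p⁻¹)⁻¹) := .inv_one_sub_inv' Fact.out
  have : Fact (1 ≤ (1 - p⁻¹)⁻¹) := ⟨by simp⟩
  refine ⟨((ContinuousLinearMap.mul ℝ ℝ).lpPairing volume p ((1 - p⁻¹)⁻¹)).flip hφ.toLp, ?_⟩
  intro z
  rw [ContinuousLinearMap.flip_apply, ContinuousLinearMap.lpPairing_eq_integral]
  apply integral_congr_ae
  filter_upwards [hφ.coeFn_toLp] with x hx
  simp [hx]

open Classical in
/-- the functional `z ↦ ∫ z φ` -/
def PL (φ : (Fin d → ℝ) → ℝ) : X d p →L[ℝ] ℝ :=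
  if h : ∃ L : X d p →L[ℝ] ℝ, ∀ z : X d p, L z = ∫ x, z x * φ x then h.choose else 0

lemma PL_apply {φ : (Fin d → ℝ) → ℝ} (h : IsTest φ) (z : X d p) :
    PL φ z = ∫ x, z x * φ x := by
  rw [PL, dif_pos (exists_pairing h)]
  exact (exists_pairing h).choose_spec z

/-- translated test function -/
def trans (y : F d) (φ : (Fin d → ℝ) → ℝ) : (Fin d → ℝ) → ℝ := fun x => φ (x - y.ofLp)

lemma IsTest.trans {φ : (Fin d → ℝ) → ℝ} (h : IsTest φ) (y : F d) : IsTest (trans y φ) := by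
  refine ⟨h.1.comp (by fun_prop), ?_⟩
  exact h.2.comp_homeomorph (Homeomorph.subRight y.ofLp)

lemma pd_trans (φ : (Fin d → ℝ) → ℝ) (y : F d) (i : Fin d) :
    pd i (trans y φ) = trans y (pd i φ) := by
  ext x
  have : fderiv ℝ (trans y φ) x = fderiv ℝ φ (x - y.ofLp) := fderiv_comp_sub _
  simp only [pd, trans, this]

lemma PL_trans {φ : (Fin d → ℝ) → ℝ} (h : IsTest φ) (y : F d) (z : X d p) :
    PL (trans y φ) z = PL φ (sh y z) := by
  rw [PL_apply (h.trans y), PL_apply h]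
  rw [← integral_add_right_eq_self _ y.ofLp]
  apply integral_congr_ae
  filter_upwards [coeFn_sh y z] with x hx
  simp [hx, trans]

lemma eq_zero_of_PL (z : X d p) (h : ∀ φ : (Fin d → ℝ) → ℝ, IsTest φ → PL φ z = 0) :
    z = 0 := by
  have : ∀ᵐ x ∂(volume : Measure (Fin d → ℝ)), z x = 0 := by
    apply ae_eq_zero_of_integral_contDiff_smul_eq_zero
    · exact (Lp.memLp z).locallyIntegrable Fact.out
    · intro g hg hg'
      have := h g ⟨hg, hg'⟩
      rw [PL_apply ⟨hg, hg'⟩] at this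
      simpa [mul_comm] using this
  exact (Lp.eq_zero_iff_ae_eq_zero).2 this

lemma hasDerivAt_PL {φ : (Fin d → ℝ) → ℝ} (h : IsTest φ) (y : F d) (z : X d p) (s : ℝ) :
    HasDerivAt (fun s : ℝ => PL φ (sh (s • y) z))
      (-∑ i, y i * PL (pd i φ) (sh (s • y) z)) s := by
  set ψ : (Fin d → ℝ) → ℝ := fun x => φ (-x) with hψ
  have hψ1 : ContDiff ℝ (⊤ : ℕ∞) ψ := h.1.comp contDiff_neg
  have hψ2 : HasCompactSupport ψ := h.2.comp_homeomorph (Homeomorph.neg _)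
  have hz : LocallyIntegrable z volume := (Lp.memLp z).locallyIntegrable Fact.out
  have key : ∀ φ : (Fin d → ℝ) → ℝ, IsTest φ → ∀ w : F d, PL φ (sh w z) =
      convolution z (fun x => φ (-x)) (ContinuousLinearMap.mul ℝ ℝ) volume w.ofLp := by
    intro φ h w
    rw [← PL_trans h, PL_apply (h.trans w)]
    simp [convolution, trans]
  have hd := hψ2.hasFDerivAt_convolution_right (ContinuousLinearMap.mul ℝ ℝ) hz
    (hψ1.of_le (by simp)) (s • y).ofLp
  have hl : HasDerivAt (fun s : ℝ => (s • y).ofLp) y.ofLp s := by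
    simpa using (hasDerivAt_id s).smul_const y.ofLp
  have hc := hd.comp_hasDerivAt s hl
  have e : (fun s : ℝ => PL φ (sh (s • y) z)) =
      (convolution z ψ (ContinuousLinearMap.mul ℝ ℝ) volume) ∘ fun s : ℝ => (s • y).ofLp := by
    ext s
    exact key φ h (s • y)
  rw [e]
  refine hc.congr_deriv (Eq.symm ?_)
  rw [convolution_precompR_apply _ hz (hψ2.fderiv ℝ) (hψ1.continuous_fderiv (by simp))]
  have : ∀ x, fderiv ℝ ψ x y.ofLp = -∑ i, y i * pd i φ (-x) := by
    intro x
    have : fderiv ℝ ψ x = - fderiv ℝ φ (-x) := by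
      have := ((h.1.differentiable (by simp) (-x)).hasFDerivAt.comp x (hasFDerivAt_id x).neg).fderiv
      refine Eq.trans this ?_
      ext v
      simp
    rw [this]
    have hy : y.ofLp = ∑ i, y i • (Pi.single i 1 : Fin d → ℝ) := by
      simpa using pi_eq_sum_univ' y.ofLp
    simp only [pd, neg_apply, neg_inj]
    conv_lhs => rw [hy]
    rw [map_sum]
    simp
  simp only [convolution, this, ContinuousLinearMap.mul_apply', mul_neg, integral_neg, neg_inj,
    Finset.mul_sum]
  rw [integral_finsetSum]
  · apply Finset.sum_congr rfl
    intro i _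
    rw [key _ (h.pd i), convolution, ← integral_const_mul]
    apply integral_congr_ae (.of_forall fun t => ?_)
    simp; ring
  · intro i _
    have := ((h.pd i).2.comp_homeomorph (Homeomorph.neg _)).convolutionExists_right
      (ContinuousLinearMap.mul ℝ ℝ) hz ((h.pd i).1.continuous.comp continuous_neg) (s • y).ofLp
    have := this.integrable.const_mul (y i)
    refine this.congr (.of_forall fun t => ?_)
    simp; ring

lemma taylor_aux (g g1 g2 g3 : ℝ → ℝ) (M : ℝ) (h0 : ∀ s, HasDerivAt g (g1 s) s)
    (h1 : ∀ s, HasDerivAt g1 (g2 s) s) (h2 : ∀ s, HasDerivAt g2 (g3 s) s)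
    (hM : ∀ s, |g3 s| ≤ M) : |g 1 - g 0 - g1 0 - g2 0 / 2| ≤ M := by
  have hM0 : 0 ≤ M := (abs_nonneg _).trans (hM 0)
  have b2 : ∀ s ∈ Icc (0:ℝ) 1, |g2 s - g2 0| ≤ M := by
    intro s hs
    have := (convex_univ (𝕜 := ℝ) (E := ℝ)).norm_image_sub_le_of_norm_hasDerivWithin_le
      (f := g2) (f' := g3) (C := M) (x := 0) (y := s)
      (fun x _ => (h2 x).hasDerivWithinAt) (fun x _ => hM x) (mem_univ _) (mem_univ _)
    simp only [Real.norm_eq_abs, sub_zero] at this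
    rw [abs_of_nonneg hs.1] at this
    nlinarith [hs.1, hs.2]
  have b1 : ∀ s ∈ Icc (0:ℝ) 1, |g1 s - g1 0 - s * g2 0| ≤ M := by
    intro s hs
    have := (convex_Icc (0:ℝ) 1).norm_image_sub_le_of_norm_hasDerivWithin_le
      (f := fun s => g1 s - g1 0 - s * g2 0) (f' := fun s => g2 s - g2 0) (C := M) (x := 0) (y := s)
      (fun x _ => by
        have := ((h1 x).sub_const (g1 0)).fun_sub ((hasDerivAt_id' x).mul_const (g2 0))
        exact (this.congr_deriv (by ring)).hasDerivWithinAt) (fun x hx => b2 x hx) (by simp) hs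
    simp only [Real.norm_eq_abs, sub_zero, sub_self, zero_mul] at this
    rw [abs_of_nonneg hs.1] at this
    nlinarith [hs.1, hs.2]
  have := (convex_Icc (0:ℝ) 1).norm_image_sub_le_of_norm_hasDerivWithin_le
      (f := fun s => g s - g 0 - s * g1 0 - s ^ 2 * (g2 0 / 2))
      (f' := fun s => g1 s - g1 0 - s * g2 0) (C := M) (x := 0) (y := 1)
      (fun x _ => by
        have := (((h0 x).sub_const (g 0)).fun_sub ((hasDerivAt_id' x).mul_const (g1 0))).fun_sub
          (((hasDerivAt_id' x).fun_pow 2).mul_const (g2 0 / 2))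
        exact (this.congr_deriv (by simp; ring)).hasDerivWithinAt) (fun x hx => b1 x hx) (by simp) (by simp)
  simpa using this

/-- Taylor expansion. -/
lemma PL_taylor {φ : (Fin d → ℝ) → ℝ} (h : IsTest φ) : ∃ C : ℝ, 0 ≤ C ∧
    ∀ (y : F d) (z : X d p), |PL φ (sh y z) - PL φ z + (∑ j, y j * PL (pd j φ) z)
      - (∑ j, ∑ i, y j * y i * PL (pd i (pd j φ)) z) / 2| ≤ C * ‖z‖ * ‖y‖ ^ 3 := by
  refine ⟨∑ k, ∑ j, ∑ i, ‖(PL (pd i (pd j (pd k φ))) : X d p →L[ℝ] ℝ)‖, by positivity, ?_⟩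
  intro y z
  have := taylor_aux (fun s : ℝ => PL φ (sh (s • y) z))
    (fun s => -∑ k, y k * PL (pd k φ) (sh (s • y) z))
    (fun s => ∑ k, y k * ∑ j, y j * PL (pd j (pd k φ)) (sh (s • y) z))
    (fun s => -∑ k, y k * ∑ j, y j * ∑ i, y i * PL (pd i (pd j (pd k φ))) (sh (s • y) z))
    ((∑ k, ∑ j, ∑ i, ‖(PL (pd i (pd j (pd k φ))) : X d p →L[ℝ] ℝ)‖) * ‖z‖ * ‖y‖ ^ 3)
    (fun s => hasDerivAt_PL h y z s)
    (fun s => by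
      have := (HasDerivAt.fun_sum (u := Finset.univ) (fun k _ =>
        (hasDerivAt_PL (h.pd k) y z s).const_mul (y k))).fun_neg
      exact this.congr_deriv (by simp))
    (fun s => by
      have := (HasDerivAt.fun_sum (u := Finset.univ) (fun k _ =>
        (HasDerivAt.fun_sum (u := Finset.univ) (fun j _ =>
        (hasDerivAt_PL ((h.pd k).pd j) y z s).const_mul (y j))).const_mul (y k)))
      exact this.congr_deriv (by simp [Finset.mul_sum]))
    (fun s => by
      rw [abs_neg]
      simp only [Finset.mul_sum, Finset.sum_mul]
      refine (Finset.abs_sum_le_sum_abs _ _).trans (Finset.sum_le_sum fun k _ => ?_)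
      refine (Finset.abs_sum_le_sum_abs _ _).trans (Finset.sum_le_sum fun j _ => ?_)
      refine (Finset.abs_sum_le_sum_abs _ _).trans (Finset.sum_le_sum fun i _ => ?_)
      rw [abs_mul, abs_mul, abs_mul]
      have h1 := (PL (pd i (pd j (pd k φ))) : X d p →L[ℝ] ℝ).le_opNorm (sh (s • y) z)
      rw [LinearIsometry.norm_map, Real.norm_eq_abs] at h1
      have hy : ∀ i, |y i| ≤ ‖y‖ := fun i => PiLp.norm_apply_le y i
      calc _ ≤ ‖y‖ * (‖y‖ * (‖y‖ * (‖(PL (pd i (pd j (pd k φ))) : X d p →L[ℝ] ℝ)‖ * ‖z‖))) := by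
            gcongr <;> apply hy
        _ = _ := by ring)
  simp only [one_smul, zero_smul, sh_zero] at this
  convert this using 2
  simp only [Finset.mul_sum, mul_assoc]
  ring

end WP

namespace WP

open ProbabilityTheory

variable {d : ℕ} {p : ℝ≥0∞} [Fact (1 ≤ p)]

/-- Gaussian measure with covariance `2H` -/
def gau (H : Matrix (Fin d) (Fin d) ℝ) : Measure (F d) := multivariateGaussian 0 ((2:ℝ) • H)

instance (H : Matrix (Fin d) (Fin d) ℝ) : IsGaussian (gau H) := by
  unfold gau; infer_instance

lemma psd_two {H : Matrix (Fin d) (Fin d) ℝ} (hH : H.PosSemidef) : ((2:ℝ) • H).PosSemidef :=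
  hH.smul (by norm_num)

lemma gau_conv {H K : Matrix (Fin d) (Fin d) ℝ} (hH : H.PosSemidef) (hK : K.PosSemidef) :
    gau H ∗ gau K = gau (H + K) := by
  apply Measure.ext_of_charFun
  ext x
  rw [charFun_conv]
  unfold gau
  rw [charFun_multivariateGaussian (psd_two hH), charFun_multivariateGaussian (psd_two hK),
    charFun_multivariateGaussian (psd_two (hH.add hK)), ← Complex.exp_add]
  congr 1
  simp only [smul_add, Matrix.add_mulVec, dotProduct_add, inner_zero_right]
  push_cast
  ring

lemma gau_memLp (H : Matrix (Fin d) (Fin d) ℝ) (i : Fin d) (q : ℝ≥0∞) (hq : q ≠ ∞) :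
    MemLp (fun y : F d => y i) q (gau H) :=
  (EuclideanSpace.proj i : F d →L[ℝ] ℝ).comp_memLp' (IsGaussian.memLp_id (gau H) q hq)

lemma gau_int1 (H : Matrix (Fin d) (Fin d) ℝ) (i : Fin d) :
    Integrable (fun y : F d => y i) (gau H) :=
  memLp_one_iff_integrable.1 (gau_memLp H i 1 (by simp))

lemma gau_int2 (H : Matrix (Fin d) (Fin d) ℝ) (i j : Fin d) :
    Integrable (fun y : F d => y i * y j) (gau H) :=
  (gau_memLp H i 2 (by simp)).integrable_mul (gau_memLp H j 2 (by simp))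

lemma gau_int_pow (H : Matrix (Fin d) (Fin d) ℝ) (n : ℕ) :
    Integrable (fun y : F d => ‖y‖ ^ n) (gau H) :=
  (IsGaussian.memLp_id (gau H) n (by simp)).integrable_norm_pow'

lemma gau_mean (H : Matrix (Fin d) (Fin d) ℝ) (i : Fin d) : ∫ y, y i ∂(gau H) = 0 := by
  have h := (EuclideanSpace.proj i : F d →L[ℝ] ℝ).integral_comp_comm
    (IsGaussian.integrable_id (μ := gau H))
  have h2 : ∫ y, id y ∂(gau H) = 0 := integral_id_multivariateGaussian
  rw [h2] at h
  simpa using h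

lemma gau_cov {H : Matrix (Fin d) (Fin d) ℝ} (hH : H.PosSemidef) (i j : Fin d) :
    ∫ y, y i * y j ∂(gau H) = 2 * H i j := by
  have h := covariance_eval_multivariateGaussian (μ := 0) (psd_two hH) i j
  have h2 := covariance_eq_sub (gau_memLp H i 2 (by simp)) (gau_memLp H j 2 (by simp))
  rw [gau_mean, zero_mul, sub_zero] at h2
  change cov[_, _; gau H] = _ at h
  rw [h] at h2
  simpa using h2.symm

lemma gau_sq {H : Matrix (Fin d) (Fin d) ℝ} (hH : H.PosSemidef) :
    ∫ y, ‖y‖ ^ 2 ∂(gau H) = 2 * ∑ i, H i i := by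
  have : ∀ y : F d, ‖y‖ ^ 2 = ∑ i, y i * y i := by
    intro y
    rw [EuclideanSpace.norm_sq_eq]
    simp [sq]
  simp_rw [this]
  rw [integral_finsetSum _ (fun i _ => gau_int2 H i i), Finset.mul_sum]
  exact Finset.sum_congr rfl fun i _ => gau_cov hH i i

/-- third absolute moment -/
def M3 : ℝ := ∫ x, |x| ^ 3 ∂(gaussianReal 0 1)

lemma M3_nonneg : 0 ≤ M3 := integral_nonneg fun x => by positivity

lemma real_third (v : ℝ) (hv : 0 ≤ v) :
    ∫ x, |x| ^ 3 ∂(gaussianReal 0 v.toNNReal) = v * √v * M3 := by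
  have h := gaussianReal_map_const_mul (μ := 0) (v := 1) (√v)
  have e : gaussianReal (√v * 0) (NNReal.mk (√v ^ 2) (sq_nonneg _) * 1) =
      gaussianReal 0 v.toNNReal := by
    congr 1
    · simp
    · ext; simp [Real.sq_sqrt hv, Real.coe_toNNReal _ hv]
  rw [← e, ← h, integral_map (by fun_prop) (by fun_prop), M3, ← integral_const_mul]
  congr 1
  ext x
  rw [abs_mul, mul_pow, abs_of_nonneg (Real.sqrt_nonneg v)]
  congr 1
  nth_rw 2 [← Real.sq_sqrt hv]
  ring

lemma gau_third_i {H : Matrix (Fin d) (Fin d) ℝ} (hH : H.PosSemidef) (i : Fin d) :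
    ∫ y, |y i| ^ 3 ∂(gau H) = (2 * H i i) * √(2 * H i i) * M3 := by
  have h := measurePreserving_eval_multivariateGaussian (μ := 0) (psd_two hH) (i := i)
  have hv : 0 ≤ 2 * H i i := mul_nonneg (by norm_num) hH.diag_nonneg
  have h2 := h.map_eq
  rw [← real_third _ hv]
  have e : (2 * H i i).toNNReal = (((2:ℝ) • H) i i).toNNReal := by simp
  rw [e]
  change Measure.map _ (gau H) = _ at h2
  simp only [PiLp.zero_apply] at h2
  rw [← h2, integral_map (by fun_prop) (by fun_prop)]

lemma gau_third {H : Matrix (Fin d) (Fin d) ℝ} (hH : H.PosSemidef) (m : ℝ)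
    (hm : ∀ i, H i i ≤ m) (hm0 : 0 ≤ m) :
    ∫ y, ‖y‖ ^ 3 ∂(gau H) ≤ (d ^ 3 * 4 * M3) * (m * √m) := by
  have h1 : ∀ y : F d, ‖y‖ ^ 3 ≤ d ^ 2 * ∑ i, |y i| ^ 3 := by
    intro y
    have h0 : ‖y‖ ≤ ∑ i, |y i| := by
      refine abs_le_of_sq_le_sq' ?_ (by positivity) |>.2
      rw [EuclideanSpace.norm_sq_eq]
      exact Finset.sum_sq_le_sq_sum_of_nonneg (fun i _ => by positivity)
    rcases Nat.eq_zero_or_pos d with hd | hd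
    · subst hd
      have : ‖y‖ = 0 := le_antisymm (by simpa using h0) (norm_nonneg _)
      simp [this]
    have h2 := pow_sum_div_card_le_sum_pow (s := Finset.univ) (f := fun i => |y i|)
      (fun i _ => abs_nonneg _) 2
    simp only [Finset.card_univ, Fintype.card_fin, Nat.reduceAdd] at h2
    rw [div_le_iff₀ (by positivity)] at h2
    calc ‖y‖ ^ 3 ≤ (∑ i, |y i|) ^ 3 := by gcongr
      _ ≤ _ := by linarith
  have hi : ∀ i, Integrable (fun y : F d => |y i| ^ 3) (gau H) := fun i => by
    simpa using (gau_memLp H i (3 : ℕ) (by simp)).integrable_norm_pow'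
  calc ∫ y, ‖y‖ ^ 3 ∂(gau H) ≤ ∫ y, d ^ 2 * ∑ i, |y i| ^ 3 ∂(gau H) := by
        apply integral_mono (gau_int_pow H 3) _ h1
        exact (integrable_finsetSum _ fun i _ => hi i).const_mul _
    _ = d ^ 2 * ∑ i, (2 * H i i) * √(2 * H i i) * M3 := by
        rw [integral_const_mul, integral_finsetSum _ fun i _ => hi i]
        congr 1
        exact Finset.sum_congr rfl fun i _ => gau_third_i hH i
    _ ≤ d ^ 2 * ∑ i : Fin d, (2 * m) * (2 * √m) * M3 := by
        gcongr with i
        · exact M3_nonneg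
        · exact hm i
        · have : √(2 * H i i) ≤ √(2 ^ 2 * m) := by
            apply Real.sqrt_le_sqrt
            have := hm i
            have h0 : 0 ≤ H i i := hH.diag_nonneg
            linarith
          rw [Real.sqrt_mul (x := 2 ^ 2) (by norm_num), Real.sqrt_sq (x := 2) (by norm_num)] at this
          exact this
    _ = _ := by
        simp only [Finset.sum_const, Finset.card_univ, Fintype.card_fin, nsmul_eq_mul]
        ring

variable [hpt : Fact (p ≠ ∞)]

lemma sh_integrable (μ : Measure (F d)) [IsFiniteMeasure μ] (z : X d p) :
    Integrable (fun y => sh y z) μ := by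
  apply Integrable.of_bound (continuous_sh hpt.out z).aestronglyMeasurable ‖z‖
  exact .of_forall fun y => by simp

/-- averaging of translations -/
def Tm (μ : Measure (F d)) [IsProbabilityMeasure μ] : X d p →L[ℝ] X d p :=
  LinearMap.mkContinuous
    { toFun := fun z => ∫ y, sh y z ∂μ
      map_add' := fun z z' => by
        simp only [map_add]
        exact integral_add (sh_integrable μ z) (sh_integrable μ z')
      map_smul' := fun c z => by
        simp only [map_smul, RingHom.id_apply]
        exact integral_smul c _ } 1
    (fun z => by
      simp only [LinearMap.coe_mk, AddHom.coe_mk, one_mul]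
      refine (norm_integral_le_integral_norm _).trans ?_
      simp)

lemma Tm_apply (μ : Measure (F d)) [IsProbabilityMeasure μ] (z : X d p) :
    Tm μ z = ∫ y, sh y z ∂μ := rfl

lemma Tm_norm (μ : Measure (F d)) [IsProbabilityMeasure μ] (z : X d p) : ‖Tm μ z‖ ≤ ‖z‖ := by
  rw [Tm_apply]
  refine (norm_integral_le_integral_norm _).trans ?_
  simp

lemma PL_Tm (φ : (Fin d → ℝ) → ℝ) (μ : Measure (F d)) [IsProbabilityMeasure μ] (z : X d p) :
    PL φ (Tm μ z) = ∫ y, PL φ (sh y z) ∂μ := by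
  rw [Tm_apply, ← ContinuousLinearMap.integral_comp_comm _ (sh_integrable μ z)]

lemma sh_Tm (μ : Measure (F d)) [IsProbabilityMeasure μ] (z : X d p) (w : F d) :
    sh w (Tm μ z) = Tm μ (sh w z) := by
  have h := (sh w : X d p →ₗᵢ[ℝ] X d p).toContinuousLinearMap.integral_comp_comm
    (sh_integrable μ z)
  rw [Tm_apply, Tm_apply]
  refine Eq.trans h.symm ?_
  congr 1
  ext1 y
  change sh w (sh y z) = _
  rw [sh_add, sh_add, add_comm]

lemma Tm_Tm (μ ν : Measure (F d)) [IsProbabilityMeasure μ] [IsProbabilityMeasure ν] (z : X d p) :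
    Tm μ (Tm ν z) = Tm (μ ∗ ν) z := by
  rw [Tm_apply (μ ∗ ν), integral_conv (sh_integrable _ z), Tm_apply]
  congr 1
  ext1 y
  rw [sh_Tm, Tm_apply]
  congr 1
  ext1 w
  rw [sh_add, add_comm]

/-- The heat operator. -/
def TH (H : Matrix (Fin d) (Fin d) ℝ) : X d p →L[ℝ] X d p := Tm (gau H)

lemma TH_add {H K : Matrix (Fin d) (Fin d) ℝ} (hH : H.PosSemidef) (hK : K.PosSemidef)
    (z : X d p) : TH H (TH K z) = TH (H + K) z := by
  rw [TH, TH, TH, Tm_Tm]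
  simp only [Tm_apply, gau_conv hH hK]

lemma TH_norm (H : Matrix (Fin d) (Fin d) ℝ) (z : X d p) : ‖TH H z‖ ≤ ‖z‖ := Tm_norm _ z

lemma TH_sh (H : Matrix (Fin d) (Fin d) ℝ) (z : X d p) (w : F d) :
    sh w (TH H z) = TH H (sh w z) := sh_Tm _ z w

lemma PL_TH_le (φ : (Fin d → ℝ) → ℝ) (H : Matrix (Fin d) (Fin d) ℝ) (z : X d p) (M : ℝ)
    (h : ∀ y, |PL φ (sh y z)| ≤ M) : |PL φ (TH H z)| ≤ M := by
  rw [TH, PL_Tm]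
  have := norm_integral_le_of_norm_le_const (μ := gau H) (f := fun y => PL φ (sh y z))
    (C := M) (.of_forall h)
  simpa using this

/-- strong continuity -/
lemma TH_cont (z : X d p) (ε : ℝ) (hε : 0 < ε) : ∃ K : ℝ, 0 ≤ K ∧
    ∀ (H : Matrix (Fin d) (Fin d) ℝ) (m : ℝ), H.PosSemidef → (∀ i, H i i ≤ m) →
      ‖TH H z - z‖ ≤ ε + K * m := by
  obtain ⟨δ, hδ, h⟩ := Metric.continuous_iff.1 (continuous_sh hpt.out z) 0 ε hε
  have hb : ∀ y : F d, ‖sh y z - z‖ ≤ ε + 2 * ‖z‖ / δ ^ 2 * ‖y‖ ^ 2 := by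
    intro y
    by_cases hy : ‖y‖ < δ
    · have := h y (by simpa using hy)
      rw [sh_zero, dist_eq_norm] at this
      have h2 : 0 ≤ 2 * ‖z‖ / δ ^ 2 * ‖y‖ ^ 2 := by positivity
      linarith
    · push Not at hy
      have h1 : ‖sh y z - z‖ ≤ 2 * ‖z‖ := by
        refine (norm_sub_le _ _).trans ?_
        simp; linarith
      have h2 : 2 * ‖z‖ ≤ 2 * ‖z‖ / δ ^ 2 * ‖y‖ ^ 2 := by
        rw [div_mul_eq_mul_div, le_div_iff₀ (by positivity)]
        gcongr
      linarith
  refine ⟨2 * ‖z‖ / δ ^ 2 * (2 * d), by positivity, ?_⟩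
  intro H m hH hm
  have e : TH H z - z = ∫ y, (sh y z - z) ∂(gau H) := by
    rw [integral_sub (sh_integrable _ z) (integrable_const _)]
    simp [TH, Tm_apply]
  rw [e]
  calc ‖∫ y, (sh y z - z) ∂(gau H)‖ ≤ ∫ y, ‖sh y z - z‖ ∂(gau H) :=
        norm_integral_le_integral_norm _
    _ ≤ ∫ y, (ε + 2 * ‖z‖ / δ ^ 2 * ‖y‖ ^ 2) ∂(gau H) := by
        apply integral_mono
        · exact ((sh_integrable _ z).sub (integrable_const _)).norm
        · exact (integrable_const _).add ((gau_int_pow H 2).const_mul _)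
        · exact hb
    _ = ε + 2 * ‖z‖ / δ ^ 2 * (2 * ∑ i, H i i) := by
        rw [integral_add (integrable_const _) ((gau_int_pow H 2).const_mul _),
          integral_const_mul, gau_sq hH]
        simp
    _ ≤ ε + 2 * ‖z‖ / δ ^ 2 * (2 * ∑ i : Fin d, m) := by
        gcongr with i
        exact hm i
    _ = _ := by simp; ring

/-- generator expansion -/
lemma TH_gen {φ : (Fin d → ℝ) → ℝ} (h : IsTest φ) : ∃ C : ℝ, 0 ≤ C ∧
    ∀ (z : X d p) (H : Matrix (Fin d) (Fin d) ℝ) (m : ℝ), H.PosSemidef → 0 ≤ m →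
      (∀ i, H i i ≤ m) →
      |PL φ (TH H z) - PL φ z - ∑ i, ∑ j, H i j * PL (pd i (pd j φ)) z|
        ≤ C * ‖z‖ * (m * √m) := by
  obtain ⟨C, hC, hb⟩ := PL_taylor (p := p) h
  refine ⟨C * (d ^ 3 * 4 * M3), mul_nonneg hC (mul_nonneg (by positivity) M3_nonneg), ?_⟩
  intro z H m hH hm0 hm
  have i0 : Integrable (fun y => PL φ (sh y z)) (gau H) :=
    (PL φ).integrable_comp (sh_integrable _ z)
  have i1 : Integrable (fun y : F d => ∑ j, y j * PL (pd j φ) z) (gau H) :=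
    integrable_finsetSum _ fun j _ => (gau_int1 H j).mul_const _
  have i2' : ∀ j, Integrable (fun y : F d => ∑ i, y j * y i * PL (pd i (pd j φ)) z) (gau H) :=
    fun j => integrable_finsetSum _ fun i _ => (gau_int2 H j i).mul_const _
  have i2 : Integrable (fun y : F d => (∑ j, ∑ i, y j * y i * PL (pd i (pd j φ)) z) / 2)
      (gau H) :=
    (integrable_finsetSum _ fun j _ => i2' j).div_const _
  have e : ∫ y, (PL φ (sh y z) - PL φ z + (∑ j, y j * PL (pd j φ) z)
      - (∑ j, ∑ i, y j * y i * PL (pd i (pd j φ)) z) / 2) ∂(gau H) =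
      PL φ (TH H z) - PL φ z - ∑ i, ∑ j, H i j * PL (pd i (pd j φ)) z := by
    have i00 : Integrable (fun y => PL φ (sh y z) - PL φ z) (gau H) :=
      i0.sub (integrable_const _)
    have i01 : Integrable (fun y : F d => PL φ (sh y z) - PL φ z + ∑ j, y j * PL (pd j φ) z)
      (gau H) := i00.add i1
    rw [integral_sub i01 i2, integral_add i00 i1, integral_sub i0 (integrable_const _),
      integral_div, integral_finsetSum _ (fun j _ => i2' j),
      integral_finsetSum _ (fun j _ => (gau_int1 H j).mul_const _)]
    simp_rw [integral_mul_const, gau_mean]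
    rw [TH, PL_Tm]
    have : ∀ j, ∫ y : F d, (∑ i, y j * y i * PL (pd i (pd j φ)) z) ∂(gau H) =
        2 * ∑ i, H i j * PL (pd i (pd j φ)) z := by
      intro j
      rw [integral_finsetSum _ fun i _ => (gau_int2 H j i).mul_const _, Finset.mul_sum]
      refine Finset.sum_congr rfl fun i _ => ?_
      rw [integral_mul_const, gau_cov hH]
      have : H j i = H i j := by simpa using hH.1.apply i j
      rw [this]; ring
    simp_rw [this]
    rw [Finset.sum_comm]
    simp only [← Finset.mul_sum]
    simp
  rw [← e]
  rw [← Real.norm_eq_abs]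
  calc _ ≤ ∫ y, C * ‖z‖ * ‖y‖ ^ 3 ∂(gau H) := by
        refine (norm_integral_le_integral_norm _).trans ?_
        apply integral_mono (((i0.sub (integrable_const _)).add i1).sub i2).norm
          ((gau_int_pow H 3).const_mul _)
        exact fun y => hb y z
    _ = C * ‖z‖ * ∫ y, ‖y‖ ^ 3 ∂(gau H) := integral_const_mul _ _
    _ ≤ C * ‖z‖ * ((d ^ 3 * 4 * M3) * (m * √m)) := by
        gcongr
        exact gau_third hH m hm hm0
    _ = _ := by ring

end WP

namespace WP

variable {d : ℕ} {p : ℝ≥0∞} [Fact (1 ≤ p)]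

lemma const_aux (g m : ℝ → ℝ) (T : ℝ) (hT : 0 ≤ T)
    (h : ∀ ε > 0, ∃ δ > 0, ∀ s t, 0 ≤ s → s ≤ t → t ≤ T → t - s < δ →
      |g t - g s| ≤ ε * (m t - m s)) : g T = g 0 := by
  have key : ∀ ε > 0, |g T - g 0| ≤ ε * (m T - m 0) := by
    intro ε hε
    obtain ⟨δ, hδ, h⟩ := h ε hε
    obtain ⟨n, hn⟩ := exists_nat_gt (T / δ)
    have hn0 : (0:ℝ) < n := lt_of_le_of_lt (by positivity) hn
    have hstep : T / n < δ := by
      rw [div_lt_iff₀ hn0]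
      rw [div_lt_iff₀ hδ] at hn
      linarith
    have hind : ∀ k : ℕ, k ≤ n → |g (k * (T / n)) - g 0| ≤ ε * (m (k * (T / n)) - m 0) := by
      intro k
      induction k with
      | zero => intro _; simp
      | succ k ih =>
        intro hk
        have h1 := ih (by omega)
        have hTn : 0 ≤ T / n := by positivity
        have hk' : ((k + 1 : ℕ) : ℝ) ≤ n := by exact_mod_cast hk
        have h2 := h (k * (T / n)) ((k + 1 : ℕ) * (T / n)) (by positivity)
          (by push_cast; linarith)
          (by
            calc ((k + 1 : ℕ) : ℝ) * (T / n) ≤ n * (T / n) := by gcongr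
              _ = T := by field_simp)
          (by push_cast; linarith)
        have := abs_add_le (g ((k + 1 : ℕ) * (T / n)) - g (k * (T / n))) (g (k * (T / n)) - g 0)
        rw [sub_add_sub_cancel] at this
        linarith
    have := hind n le_rfl
    have e : n * (T / n) = T := by field_simp
    rwa [e] at this
  have h0 : |g T - g 0| ≤ 0 := by
    have hlim : Filter.Tendsto (fun ε : ℝ => ε * (m T - m 0)) (nhdsWithin 0 (Ioi 0)) (nhds 0) := by
      have : Filter.Tendsto (fun ε : ℝ => ε * (m T - m 0)) (nhds 0) (nhds (0 * (m T - m 0))) :=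
        (continuous_id.mul continuous_const).tendsto 0
      rw [zero_mul] at this
      exact this.mono_left nhdsWithin_le_nhds
    refine ge_of_tendsto hlim ?_
    filter_upwards [self_mem_nhdsWithin] with ε hε
    exact key ε hε
  have := abs_nonpos_iff.1 h0
  linarith

/-- Standing assumptions, globalised in time. -/
structure Good (a : ℝ → Fin d → Fin d → ℝ) : Prop where
  int : ∀ i j, Integrable (fun t => a t i j)
  symm : ∀ t i j, a t i j = a t j i
  pos : ∀ t, ∀ ξ : Fin d → ℝ, 0 ≤ ∑ i, ∑ j, a t i j * ξ i * ξ j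

/-- integrated coefficients -/
def Hm (a : ℝ → Fin d → Fin d → ℝ) (s t : ℝ) : Matrix (Fin d) (Fin d) ℝ :=
  Matrix.of fun i j => ∫ r in s..t, a r i j

/-- total size of the coefficients -/
def al (a : ℝ → Fin d → Fin d → ℝ) (r : ℝ) : ℝ := ∑ i, ∑ j, |a r i j|

/-- integrated size -/
def mm (a : ℝ → Fin d → Fin d → ℝ) (t : ℝ) : ℝ := ∫ r in (0:ℝ)..t, al a r

variable {a : ℝ → Fin d → Fin d → ℝ}

lemma Good.al_int (h : Good a) : Integrable (al a) :=
  integrable_finsetSum _ fun i _ => integrable_finsetSum _ fun j _ => (h.int i j).abs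

lemma al_nonneg (r : ℝ) : 0 ≤ al a r := by unfold al; positivity

lemma Good.mm_cont (h : Good a) : Continuous (mm a) :=
  intervalIntegral.continuous_primitive (fun _ _ => h.al_int.intervalIntegrable) 0

lemma Good.mm_sub (h : Good a) (s t : ℝ) : mm a t - mm a s = ∫ r in s..t, al a r := by
  unfold mm
  rw [intervalIntegral.integral_interval_sub_left h.al_int.intervalIntegrable
    h.al_int.intervalIntegrable]

lemma Good.mm_mono (h : Good a) {s t : ℝ} (hst : s ≤ t) : 0 ≤ mm a t - mm a s := by
  rw [h.mm_sub]
  exact intervalIntegral.integral_nonneg hst fun r _ => al_nonneg r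

lemma abs_le_al (r : ℝ) (i j : Fin d) : |a r i j| ≤ al a r := by
  unfold al
  refine le_trans ?_ (Finset.single_le_sum (f := fun i => ∑ j, |a r i j|)
    (fun i _ => by positivity) (Finset.mem_univ i))
  exact Finset.single_le_sum (f := fun j => |a r i j|) (fun i _ => by positivity)
    (Finset.mem_univ j)

lemma Good.Hm_le (h : Good a) {s t : ℝ} (hst : s ≤ t) (i j : Fin d) :
    Hm a s t i j ≤ mm a t - mm a s := by
  rw [h.mm_sub]
  exact intervalIntegral.integral_mono hst (h.int i j).intervalIntegrable
    h.al_int.intervalIntegrable fun r => (le_abs_self _).trans (abs_le_al r i j)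

lemma Good.Hm_add (h : Good a) (s r t : ℝ) : Hm a r t + Hm a s r = Hm a s t := by
  ext i j
  simp only [Hm, Matrix.add_apply, Matrix.of_apply]
  rw [add_comm]
  exact intervalIntegral.integral_add_adjacent_intervals (h.int i j).intervalIntegrable
    (h.int i j).intervalIntegrable

lemma Good.Hm_psd (h : Good a) {s t : ℝ} (hst : s ≤ t) : (Hm a s t).PosSemidef := by
  apply Matrix.PosSemidef.of_dotProduct_mulVec_nonneg
  · ext i j
    simp only [Hm, Matrix.conjTranspose_apply, Matrix.of_apply, star_trivial]
    exact intervalIntegral.integral_congr fun r _ => h.symm r j i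
  · intro ξ
    have e : star ξ ⬝ᵥ (Hm a s t).mulVec ξ = ∫ r in s..t, ∑ i, ∑ j, a r i j * ξ i * ξ j := by
      rw [intervalIntegral.integral_finsetSum]
      · simp only [dotProduct, Matrix.mulVec, Finset.mul_sum]
        refine Finset.sum_congr rfl fun i _ => ?_
        rw [intervalIntegral.integral_finsetSum]
        · refine Finset.sum_congr rfl fun j _ => ?_
          rw [intervalIntegral.integral_mul_const, intervalIntegral.integral_mul_const]
          simp [Hm]; ring
        · exact fun j _ => (((h.int i j).mul_const _).mul_const _).intervalIntegrable
      · exact fun i _ => (integrable_finsetSum _ fun j _ =>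
          ((h.int i j).mul_const _).mul_const _).intervalIntegrable
    rw [e]
    exact intervalIntegral.integral_nonneg hst fun r _ => h.pos r ξ

variable [hpt : Fact (p ≠ ∞)]

/-- evolution operators -/
def U (p : ℝ≥0∞) [Fact (1 ≤ p)] [hpt : Fact (p ≠ ∞)] (a : ℝ → Fin d → Fin d → ℝ) (s t : ℝ) :
    X d p →L[ℝ] X d p := TH (Hm a s t)

lemma U_norm (s t : ℝ) (z : X d p) : ‖U p a s t z‖ ≤ ‖z‖ := TH_norm _ z

lemma Good.U_comp (h : Good a) {s r t : ℝ} (h1 : s ≤ r) (h2 : r ≤ t) (z : X d p) :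
    U p a r t (U p a s r z) = U p a s t z := by
  unfold U
  rw [TH_add (h.Hm_psd h2) (h.Hm_psd h1), h.Hm_add]

lemma Good.U_comp' (h : Good a) {s r t : ℝ} (h1 : s ≤ r) (h2 : r ≤ t) (z : X d p) :
    U p a s r (U p a r t z) = U p a s t z := by
  unfold U
  rw [TH_add (h.Hm_psd h1) (h.Hm_psd h2), add_comm, h.Hm_add]

lemma Good.U_self (h : Good a) (t : ℝ) (z : X d p) : U p a t t z = z := by
  have : ∀ ε > 0, ‖U p a t t z - z‖ ≤ 0 + ε := by
    intro ε hε
    obtain ⟨K, _, hK⟩ := TH_cont z ε hε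
    have := hK (Hm a t t) 0 (h.Hm_psd le_rfl) (fun i => by simp [Hm])
    simpa [U] using this
  have := le_of_forall_pos_le_add this
  exact sub_eq_zero.1 (norm_le_zero_iff.1 this)

lemma Good.U_cont (h : Good a) (z : X d p) (ε : ℝ) (hε : 0 < ε) : ∃ K : ℝ, 0 ≤ K ∧
    ∀ s t, s ≤ t → ‖U p a s t z - z‖ ≤ ε + K * (mm a t - mm a s) := by
  obtain ⟨K, hK0, hK⟩ := TH_cont z ε hε
  exact ⟨K, hK0, fun s t hst => hK _ _ (h.Hm_psd hst) fun i => h.Hm_le hst i i⟩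

lemma Good.U_gen (h : Good a) {φ : (Fin d → ℝ) → ℝ} (hφ : IsTest φ) : ∃ C : ℝ, 0 ≤ C ∧
    ∀ (z : X d p) (s t : ℝ), s ≤ t →
      |PL φ (U p a s t z) - PL φ z - ∑ i, ∑ j, Hm a s t i j * PL (pd i (pd j φ)) z|
        ≤ C * ‖z‖ * ((mm a t - mm a s) * √(mm a t - mm a s)) := by
  obtain ⟨C, hC, hb⟩ := TH_gen (p := p) hφ
  exact ⟨C, hC, fun z s t hst => hb z _ _ (h.Hm_psd hst) (h.mm_mono hst)
    fun i => h.Hm_le hst i i⟩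

/-- second order constant -/
def K2 (p : ℝ≥0∞) [Fact (1 ≤ p)] (φ : (Fin d → ℝ) → ℝ) : ℝ :=
  ∑ i, ∑ j, ‖(PL (pd i (pd j φ)) : X d p →L[ℝ] ℝ)‖

lemma K2_nonneg (φ : (Fin d → ℝ) → ℝ) : 0 ≤ K2 p φ := by unfold K2; positivity

lemma le_K2 (φ : (Fin d → ℝ) → ℝ) (i j : Fin d) :
    ‖(PL (pd i (pd j φ)) : X d p →L[ℝ] ℝ)‖ ≤ K2 p φ := by
  unfold K2
  refine le_trans ?_ (Finset.single_le_sum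
    (f := fun i => ∑ j, ‖(PL (pd i (pd j φ)) : X d p →L[ℝ] ℝ)‖)
    (fun i _ => by positivity) (Finset.mem_univ i))
  exact Finset.single_le_sum (f := fun j => ‖(PL (pd i (pd j φ)) : X d p →L[ℝ] ℝ)‖)
    (fun i _ => by positivity) (Finset.mem_univ j)

/-- crude first-order bound for the evolution -/
lemma Good.U_gen1 (h : Good a) {φ : (Fin d → ℝ) → ℝ} (hφ : IsTest φ) : ∃ C : ℝ, 0 ≤ C ∧
    ∀ (z : X d p) (s t : ℝ), s ≤ t → mm a t - mm a s ≤ 1 →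
      |PL φ (U p a s t z) - PL φ z| ≤ C * ‖z‖ * (mm a t - mm a s) := by
  obtain ⟨C, hC, hb⟩ := h.U_gen (p := p) hφ
  refine ⟨C + d * d * K2 p φ, add_nonneg hC (mul_nonneg (by positivity) (K2_nonneg φ)), ?_⟩
  intro z s t hst hm
  set m := mm a t - mm a s with hmdef
  have hm0 : 0 ≤ m := h.mm_mono hst
  have h1 := hb z s t hst
  have h2 : |∑ i, ∑ j, Hm a s t i j * PL (pd i (pd j φ)) z| ≤ d * d * K2 p φ * ‖z‖ * m := by
    calc _ ≤ ∑ i : Fin d, ∑ j : Fin d, m * (K2 p φ * ‖z‖) := by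
          refine (Finset.abs_sum_le_sum_abs _ _).trans (Finset.sum_le_sum fun i _ => ?_)
          refine (Finset.abs_sum_le_sum_abs _ _).trans (Finset.sum_le_sum fun j _ => ?_)
          rw [abs_mul]
          gcongr
          · have : |Hm a s t i j| ≤ ∫ r in s..t, |a r i j| :=
              intervalIntegral.abs_integral_le_integral_abs hst
            refine this.trans ?_
            rw [hmdef, h.mm_sub]
            exact intervalIntegral.integral_mono hst (h.int i j).abs.intervalIntegrable
              h.al_int.intervalIntegrable fun r => abs_le_al r i j
          · have := (PL (pd i (pd j φ)) : X d p →L[ℝ] ℝ).le_opNorm z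
            refine this.trans ?_
            gcongr
            exact le_K2 φ i j
      _ = _ := by simp; ring
  have h3 : √m ≤ 1 := Real.sqrt_le_one.2 hm
  have h4 : C * ‖z‖ * (m * √m) ≤ C * ‖z‖ * (m * 1) := by gcongr
  have h5 := abs_add_le (PL φ (U p a s t z) - PL φ z - ∑ i, ∑ j, Hm a s t i j * PL (pd i (pd j φ)) z)
    (∑ i, ∑ j, Hm a s t i j * PL (pd i (pd j φ)) z)
  rw [sub_add_cancel] at h5
  linarith

lemma Good.int_mul (h : Good a) {s t : ℝ} (hst : s ≤ t) {x : ℝ → X d p}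
    (hx : ContinuousOn x (Icc s t)) (i j : Fin d) (L : X d p →L[ℝ] ℝ) :
    IntervalIntegrable (fun r => a r i j * L (x r)) volume s t := by
  apply IntervalIntegrable.mul_continuousOn (h.int i j).intervalIntegrable
  rw [uIcc_of_le hst]
  exact L.continuous.comp_continuousOn hx

lemma Good.int_sum (h : Good a) {s t : ℝ} (hst : s ≤ t) {x : ℝ → X d p}
    (hx : ContinuousOn x (Icc s t)) (φ : (Fin d → ℝ) → ℝ) :
    IntervalIntegrable (fun r => ∑ i, ∑ j, a r i j * PL (pd i (pd j φ)) (x r)) volume s t := by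
  rw [intervalIntegrable_iff]
  exact integrable_finsetSum _ fun i _ => integrable_finsetSum _ fun j _ =>
    intervalIntegrable_iff.1 (h.int_mul hst hx i j _)

lemma Good.freeze (h : Good a) {s t : ℝ} (hst : s ≤ t) {x : ℝ → X d p}
    (hx : ContinuousOn x (Icc s t)) (φ : (Fin d → ℝ) → ℝ) (ε : ℝ)
    (hε : ∀ r ∈ Icc s t, ‖x r - x s‖ ≤ ε) :
    |(∫ r in s..t, ∑ i, ∑ j, a r i j * PL (pd i (pd j φ)) (x r))
      - ∑ i, ∑ j, Hm a s t i j * PL (pd i (pd j φ)) (x s)| ≤ K2 p φ * ε * (mm a t - mm a s) := by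
  have e : ∑ i, ∑ j, Hm a s t i j * PL (pd i (pd j φ)) (x s) =
      ∫ r in s..t, ∑ i, ∑ j, a r i j * PL (pd i (pd j φ)) (x s) := by
    rw [intervalIntegral.integral_finsetSum]
    · refine Finset.sum_congr rfl fun i _ => ?_
      rw [intervalIntegral.integral_finsetSum]
      · refine Finset.sum_congr rfl fun j _ => ?_
        rw [intervalIntegral.integral_mul_const]
        rfl
      · exact fun j _ => ((h.int i j).mul_const _).intervalIntegrable
    · exact fun i _ => (integrable_finsetSum _ fun j _ =>
          ((h.int i j).mul_const _)).intervalIntegrable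
  rw [e, ← intervalIntegral.integral_sub (h.int_sum hst hx φ)
    (h.int_sum hst (x := fun _ => x s) continuousOn_const φ), h.mm_sub,
    ← intervalIntegral.integral_const_mul, ← Real.norm_eq_abs]
  apply intervalIntegral.norm_integral_le_of_norm_le hst
  · refine .of_forall fun r hr => ?_
    have hr' := hε r (Ioc_subset_Icc_self hr)
    have hε0 : 0 ≤ ε := (norm_nonneg _).trans hr'
    simp only [← Finset.sum_sub_distrib, ← mul_sub, ← map_sub]
    rw [al, Finset.mul_sum]
    refine (norm_sum_le _ _).trans (Finset.sum_le_sum fun i _ => ?_)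
    rw [Finset.mul_sum]
    refine (norm_sum_le _ _).trans (Finset.sum_le_sum fun j _ => ?_)
    rw [norm_mul, Real.norm_eq_abs (a r i j), mul_comm]
    gcongr
    refine ((PL (pd i (pd j φ)) : X d p →L[ℝ] ℝ).le_opNorm _).trans ?_
    gcongr
    · exact K2_nonneg φ
    · exact le_K2 φ i j
  · exact (h.al_int.const_mul _).intervalIntegrable

end WP

namespace WP

variable {d : ℕ} {p : ℝ≥0∞} [Fact (1 ≤ p)] [hpt : Fact (p ≠ ∞)]
variable {a : ℝ → Fin d → Fin d → ℝ}

lemma Good.V_cont (h : Good a) (t : ℝ) (z : X d p) :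
    Continuous fun r => U p a (min r t) t z := by
  rw [Metric.continuous_iff]
  intro r0 ε hε
  obtain ⟨K, hK0, hK⟩ := h.U_cont z (ε / 2) (by positivity)
  have hmc : Continuous fun r => mm a (min r t) := h.mm_cont.comp (by fun_prop)
  obtain ⟨δ, hδ, hd⟩ := Metric.continuous_iff.1 hmc r0 (ε / (2 * (K + 1))) (by positivity)
  refine ⟨δ, hδ, fun r hr => ?_⟩
  have key : ∀ r1 r2, r1 ≤ r2 → r2 ≤ t → ‖U p a r1 t z - U p a r2 t z‖ ≤
      ε / 2 + K * |mm a r2 - mm a r1| := by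
    intro r1 r2 h12 h2t
    rw [← h.U_comp h12 h2t, ← map_sub]
    refine (U_norm _ _ _).trans ?_
    rw [abs_of_nonneg (h.mm_mono h12)]
    exact hK r1 r2 h12
  have hb := hd r hr
  rw [Real.dist_eq] at hb
  have hfin : ε / 2 + K * |mm a (min r t) - mm a (min r0 t)| < ε := by
    rw [lt_div_iff₀ (by positivity)] at hb
    nlinarith [abs_nonneg (mm a (min r t) - mm a (min r0 t))]
  refine lt_of_le_of_lt ?_ hfin
  rw [dist_eq_norm]
  rcases le_total r r0 with hrr | hrr
  · rw [abs_sub_comm]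
    exact key _ _ (min_le_min_right t hrr) (min_le_right _ _)
  · rw [norm_sub_rev]
    exact key _ _ (min_le_min_right t hrr) (min_le_right _ _)

lemma Good.V_joint (h : Good a) (t : ℝ) :
    Continuous fun q : ℝ × X d p => U p a (min q.1 t) t q.2 := by
  apply continuous_prod_of_continuous_lipschitzWith' _ 1
  · intro r
    apply LipschitzWith.of_dist_le_mul
    intro z z'
    simp only [dist_eq_norm, ← map_sub, NNReal.coe_one, one_mul]
    exact U_norm _ _ _
  · intro z
    exact h.V_cont t z

lemma asm_comp {E : Type*} [NormedAddCommGroup E] {G : ℝ × E → E} (hG : Continuous G)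
    {f : ℝ → E} (hf : AEStronglyMeasurable f volume) :
    AEStronglyMeasurable (fun r => G (r, f r)) volume := by
  have hm : AEStronglyMeasurable (fun r : ℝ => ((r, f r) : ℝ × E)) volume :=
    AEStronglyMeasurable.prodMk (f := fun r : ℝ => r) measurable_id.aestronglyMeasurable hf
  exact hG.comp_aestronglyMeasurable hm

lemma Good.mild_int (h : Good a) {f : ℝ → X d p} (hf : Integrable f) {s t : ℝ} (hst : s ≤ t) :
    IntervalIntegrable (fun r => U p a r t (f r)) volume s t := by
  rw [intervalIntegrable_iff_integrableOn_Ioc_of_le hst]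
  have h1 : Integrable (fun r => U p a (min r t) t (f r)) := by
    refine hf.norm.mono' ?_ (.of_forall fun r => U_norm _ _ _)
    exact asm_comp (h.V_joint t) hf.aestronglyMeasurable
  refine (h1.integrableOn (s := Ioc s t)).congr_fun (fun r hr => ?_) measurableSet_Ioc
  simp [min_eq_left hr.2]

/-- mild solution -/
def mild (a : ℝ → Fin d → Fin d → ℝ) (u0 : X d p) (f : ℝ → X d p) (t : ℝ) : X d p :=
  U p a 0 t u0 + ∫ r in (0:ℝ)..t, U p a r t (f r)

variable {f : ℝ → X d p} {u0 : X d p}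

lemma Good.mild_zero (h : Good a) : mild a u0 f 0 = u0 := by
  simp [mild, h.U_self]

lemma Good.mild_evo (h : Good a) (hf : Integrable f) {s t : ℝ} (hs : 0 ≤ s) (hst : s ≤ t) :
    mild a u0 f t = U p a s t (mild a u0 f s) + ∫ r in s..t, U p a r t (f r) := by
  have hi := h.mild_int hf (hs.trans hst)
  have h1 : IntervalIntegrable (fun r => U p a r t (f r)) volume 0 s :=
    hi.mono_set (by
      rw [uIcc_of_le hs, uIcc_of_le (hs.trans hst)]
      exact Icc_subset_Icc_right hst)
  have h2 := h.mild_int hf hst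
  unfold mild
  rw [map_add, h.U_comp hs hst, add_assoc,
    ← ContinuousLinearMap.intervalIntegral_comp_comm _ (h.mild_int hf hs),
    ← intervalIntegral.integral_add_adjacent_intervals h1 h2]
  congr 2
  apply intervalIntegral.integral_congr
  intro r hr
  rw [uIcc_of_le hs] at hr
  exact (h.U_comp hr.2 hst _).symm

lemma integral_U_le (hf : Integrable f) {s t : ℝ} (hst : s ≤ t) :
    ‖∫ r in s..t, U p a r t (f r)‖ ≤ ∫ r in s..t, ‖f r‖ := by
  apply intervalIntegral.norm_integral_le_of_norm_le hst
  · exact .of_forall fun r _ => U_norm _ _ _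
  · exact hf.norm.intervalIntegrable

lemma mild_norm (hf : Integrable f) {t : ℝ} (ht : 0 ≤ t) :
    ‖mild a u0 f t‖ ≤ ‖u0‖ + ∫ r in (0:ℝ)..t, ‖f r‖ := by
  refine (norm_add_le _ _).trans (add_le_add (U_norm _ _ _) (integral_U_le hf ht))

/-- primitive of the norm of `f` -/
def nn (f : ℝ → X d p) (t : ℝ) : ℝ := ∫ r in (0:ℝ)..t, ‖f r‖

lemma nn_cont (hf : Integrable f) : Continuous (nn f) :=
  intervalIntegral.continuous_primitive (fun _ _ => hf.norm.intervalIntegrable) 0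

lemma nn_sub (hf : Integrable f) (s t : ℝ) : nn f t - nn f s = ∫ r in s..t, ‖f r‖ := by
  unfold nn
  rw [intervalIntegral.integral_interval_sub_left hf.norm.intervalIntegrable
    hf.norm.intervalIntegrable]

lemma nn_mono (hf : Integrable f) {s t : ℝ} (hst : s ≤ t) : 0 ≤ nn f t - nn f s := by
  rw [nn_sub hf]
  exact intervalIntegral.integral_nonneg hst fun r _ => norm_nonneg _

lemma Good.mild_cont (h : Good a) (hf : Integrable f) : ContinuousOn (mild a u0 f) (Ici 0) := by
  have key : ∀ r s t, 0 ≤ r → r ≤ s → s ≤ t → ‖mild a u0 f t - mild a u0 f s‖ ≤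
      ‖U p a s t (mild a u0 f r) - mild a u0 f r‖ + 2 * (nn f t - nn f r) := by
    intro r s t hr hrs hst
    have e : mild a u0 f t - mild a u0 f s =
        U p a r s (U p a s t (mild a u0 f r) - mild a u0 f r)
        + ((∫ q in r..t, U p a q t (f q)) - ∫ q in r..s, U p a q s (f q)) := by
      rw [h.mild_evo hf hr (hrs.trans hst), h.mild_evo hf hr hrs, map_sub, h.U_comp' hrs hst]
      abel
    rw [e]
    have h1 := integral_U_le (a := a) hf (hrs.trans hst)
    have h2 := integral_U_le (a := a) hf hrs
    rw [← nn_sub hf] at h1 h2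
    have h3 := nn_mono hf hst
    refine (norm_add_le _ _).trans (add_le_add (U_norm _ _ _) ?_)
    refine (norm_sub_le _ _).trans ?_
    linarith
  rw [Metric.continuousOn_iff]
  intro t0 ht0 ε hε
  obtain ⟨δ, hδ, hd⟩ := Metric.continuous_iff.1 (nn_cont hf) t0 (ε / 8) (by positivity)
  set r := max 0 (t0 - δ / 2) with hr
  have hr0 : 0 ≤ r := le_max_left _ _
  have hrt : r ≤ t0 := max_le ht0 (by linarith)
  have hrd : |nn f r - nn f t0| < ε / 8 := by
    have := hd r (by
      rw [Real.dist_eq, abs_of_nonpos (by linarith)]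
      have := le_max_right 0 (t0 - δ / 2)
      linarith)
    rwa [Real.dist_eq] at this
  obtain ⟨K, hK0, hK⟩ := h.U_cont (mild a u0 f r) (ε / 8) (by positivity)
  obtain ⟨δ', hδ', hd'⟩ := Metric.continuous_iff.1 h.mm_cont t0 (ε / (8 * (K + 1))) (by positivity)
  refine ⟨min (δ / 2) δ', by positivity, fun t ht htt => ?_⟩
  rw [Real.dist_eq] at htt
  have htt1 : |t - t0| < δ / 2 := htt.trans_le (min_le_left _ _)
  have htt2 : |t - t0| < δ' := htt.trans_le (min_le_right _ _)
  have hrt' : r ≤ t := max_le ht (by linarith [(abs_lt.1 htt1).1])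
  have hn : |nn f t - nn f t0| < ε / 8 := by
    have := hd t (by rw [Real.dist_eq]; linarith)
    rwa [Real.dist_eq] at this
  have hm : K * |mm a t - mm a t0| < ε / 8 := by
    have := hd' t (by rwa [Real.dist_eq])
    rw [Real.dist_eq, lt_div_iff₀ (by positivity)] at this
    nlinarith [abs_nonneg (mm a t - mm a t0)]
  rw [dist_eq_norm]
  have a1 := abs_lt.1 hrd
  have a2 := abs_lt.1 hn
  rcases le_total t t0 with htl | htl
  · rw [norm_sub_rev]
    have h1 := key r t t0 hr0 hrt' htl
    have h2 := hK t t0 htl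
    rw [abs_sub_comm, abs_of_nonneg (h.mm_mono htl)] at hm
    linarith
  · have h1 := key r t0 t hr0 hrt htl
    have h2 := hK t0 t htl
    rw [abs_of_nonneg (h.mm_mono htl)] at hm
    linarith

/-- weak formulation in terms of the functionals `PL` -/
def Weak (T : ℝ) (a : ℝ → Fin d → Fin d → ℝ) (u0 : X d p) (f u : ℝ → X d p) : Prop :=
  ∀ φ : (Fin d → ℝ) → ℝ, IsTest φ → ∀ t ∈ Icc (0:ℝ) T, PL φ (u t) = PL φ u0 +
    ∫ r in (0:ℝ)..t, ((∑ i, ∑ j, a r i j * PL (pd i (pd j φ)) (u r)) + PL φ (f r))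

/-- uniform modulus of continuity on `[0,T]` -/
lemma modulus {E : Type*} [NormedAddCommGroup E] {x : ℝ → E} {T : ℝ}
    (hx : ContinuousOn x (Icc 0 T)) (ε : ℝ) (hε : 0 < ε) :
    ∃ δ > 0, ∀ s t, 0 ≤ s → s ≤ t → t ≤ T → t - s < δ → ‖x t - x s‖ ≤ ε := by
  have := isCompact_Icc.uniformContinuousOn_of_continuous hx
  rw [Metric.uniformContinuousOn_iff] at this
  obtain ⟨δ, hδ, h⟩ := this ε hε
  refine ⟨δ, hδ, fun s t hs hst ht hd => ?_⟩
  rw [← dist_eq_norm]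
  exact (h t ⟨hs.trans hst, ht⟩ s ⟨hs, hst.trans ht⟩
    (by rwa [Real.dist_eq, abs_of_nonneg (by linarith)])).le

lemma bounded {E : Type*} [NormedAddCommGroup E] {x : ℝ → E} {T : ℝ}
    (hx : ContinuousOn x (Icc 0 T)) : ∃ B : ℝ, 0 ≤ B ∧ ∀ t ∈ Icc 0 T, ‖x t‖ ≤ B := by
  obtain ⟨B, hB⟩ := isCompact_Icc.exists_bound_of_continuousOn hx
  exact ⟨max B 0, le_max_right _ _, fun t ht => (hB t ht).trans (le_max_left _ _)⟩

lemma Good.mild_weak (h : Good a) (hf : Integrable f) (T : ℝ) : Weak T a u0 f (mild a u0 f) := by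
  intro φ hφ t0 ht0
  set u := mild a u0 f with hu
  have huc : ContinuousOn u (Ici 0) := h.mild_cont hf
  have hII : ∀ s t, 0 ≤ s → s ≤ t → IntervalIntegrable
      (fun r => (∑ i, ∑ j, a r i j * PL (pd i (pd j φ)) (u r)) + PL φ (f r)) volume s t := by
    intro s t hs hst
    exact (h.int_sum hst (huc.mono fun r hr => hs.trans hr.1) φ).add
      ((PL φ).integrable_comp hf).intervalIntegrable
  obtain ⟨B, hB0, hB⟩ := bounded (T := t0) (huc.mono Icc_subset_Ici_self)
  obtain ⟨C, hC0, hC⟩ := h.U_gen (p := p) hφ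
  obtain ⟨C1, hC10, hC1⟩ := h.U_gen1 (p := p) hφ
  set g : ℝ → ℝ := fun t => PL φ (u t) -
    ∫ r in (0:ℝ)..t, ((∑ i, ∑ j, a r i j * PL (pd i (pd j φ)) (u r)) + PL φ (f r)) with hg
  have := const_aux g (fun t => mm a t + nn f t) t0 ht0.1 (by
    intro ε hε
    have hK := K2_nonneg (p := p) φ
    set η := min 1 (ε / (K2 p φ + C * B + C1 + 1)) with hη
    have hη0 : 0 < η := by positivity
    have hη1 : η ≤ 1 := min_le_left _ _
    have hηε : η * (K2 p φ + C * B + C1) ≤ ε := by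
      have : η ≤ ε / (K2 p φ + C * B + C1 + 1) := min_le_right _ _
      rw [le_div_iff₀ (by positivity)] at this
      linarith
    obtain ⟨δ1, hδ1, h1⟩ := modulus (T := t0) (huc.mono Icc_subset_Ici_self) η hη0
    obtain ⟨δ2, hδ2, h2⟩ := modulus (T := t0) h.mm_cont.continuousOn (η ^ 2) (by positivity)
    refine ⟨min δ1 δ2, by positivity, fun s t hs hst ht hd => ?_⟩
    have hd1 := hd.trans_le (min_le_left _ _)
    have hd2 := hd.trans_le (min_le_right _ _)
    have hm0 := h.mm_mono hst
    have hm := h2 s t hs hst ht hd2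
    rw [Real.norm_eq_abs, abs_of_nonneg hm0] at hm
    have hmη : mm a t - mm a s ≤ η := hm.trans (by nlinarith)
    have hsq : √(mm a t - mm a s) ≤ η := by
      rw [Real.sqrt_le_left hη0.le]; exact hm
    have T1 := hC (u s) s t hst
    have T1' : C * ‖u s‖ * ((mm a t - mm a s) * √(mm a t - mm a s)) ≤
        C * B * ((mm a t - mm a s) * η) := by
      gcongr
      exact hB s ⟨hs, hst.trans ht⟩
    have T2 := h.freeze hst (x := u) (huc.mono fun r hr => hs.trans hr.1) φ η
      (fun r hr => h1 s r hs hr.1 (hr.2.trans ht) (by linarith [hr.2]))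
    have T3 : |(∫ r in s..t, PL φ (U p a r t (f r))) - ∫ r in s..t, PL φ (f r)| ≤
        C1 * η * (nn f t - nn f s) := by
      have i1 : IntervalIntegrable (fun r => PL φ (U p a r t (f r))) volume s t := by
        have := h.mild_int hf hst
        rw [intervalIntegrable_iff] at this ⊢
        exact (PL φ).integrable_comp this
      rw [← intervalIntegral.integral_sub i1
        ((PL φ).integrable_comp hf).intervalIntegrable, nn_sub hf,
        ← intervalIntegral.integral_const_mul, ← Real.norm_eq_abs]
      apply intervalIntegral.norm_integral_le_of_norm_le hst
      · refine .of_forall fun r hr => ?_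
        have hmr : mm a t - mm a r ≤ η := by
          have := h.mm_mono hr.1.le
          linarith
        have := hC1 (f r) r t hr.2 (hmr.trans hη1)
        rw [Real.norm_eq_abs]
        refine this.trans ?_
        calc C1 * ‖f r‖ * (mm a t - mm a r) ≤ C1 * ‖f r‖ * η := by gcongr
          _ = _ := by ring
      · exact (hf.norm.const_mul _).intervalIntegrable
    have hn0 := nn_mono hf hst
    have evo : PL φ (u t) = PL φ (U p a s t (u s)) + ∫ r in s..t, PL φ (U p a r t (f r)) := by
      rw [hu, h.mild_evo hf hs hst, map_add,
        ← ContinuousLinearMap.intervalIntegral_comp_comm _ (h.mild_int hf hst)]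
    have hgd : g t - g s = (PL φ (U p a s t (u s)) - PL φ (u s)
          - ∑ i, ∑ j, Hm a s t i j * PL (pd i (pd j φ)) (u s))
        - ((∫ r in s..t, ∑ i, ∑ j, a r i j * PL (pd i (pd j φ)) (u r))
          - ∑ i, ∑ j, Hm a s t i j * PL (pd i (pd j φ)) (u s))
        + ((∫ r in s..t, PL φ (U p a r t (f r))) - ∫ r in s..t, PL φ (f r)) := by
      have e2 := intervalIntegral.integral_add
        (h.int_sum hst (huc.mono fun r hr => hs.trans hr.1) φ)
        ((PL φ).integrable_comp hf).intervalIntegrable (μ := volume) (a := s) (b := t)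
      have e3 := intervalIntegral.integral_add_adjacent_intervals (hII 0 s le_rfl hs)
        (hII s t hs hst)
      simp only [hg]
      rw [← e3, e2, evo]
      ring
    rw [hgd]
    have n1 := abs_add_le ((PL φ (U p a s t (u s)) - PL φ (u s)
          - ∑ i, ∑ j, Hm a s t i j * PL (pd i (pd j φ)) (u s))
        - ((∫ r in s..t, ∑ i, ∑ j, a r i j * PL (pd i (pd j φ)) (u r))
          - ∑ i, ∑ j, Hm a s t i j * PL (pd i (pd j φ)) (u s)))
        ((∫ r in s..t, PL φ (U p a r t (f r))) - ∫ r in s..t, PL φ (f r))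
    have n2 := abs_sub (PL φ (U p a s t (u s)) - PL φ (u s)
          - ∑ i, ∑ j, Hm a s t i j * PL (pd i (pd j φ)) (u s))
        ((∫ r in s..t, ∑ i, ∑ j, a r i j * PL (pd i (pd j φ)) (u r))
          - ∑ i, ∑ j, Hm a s t i j * PL (pd i (pd j φ)) (u s))
    calc _ ≤ C * B * ((mm a t - mm a s) * η) + K2 p φ * η * (mm a t - mm a s)
          + C1 * η * (nn f t - nn f s) := by linarith
      _ ≤ (η * (K2 p φ + C * B + C1)) * ((mm a t - mm a s) + (nn f t - nn f s)) := by
          have q1 : 0 ≤ η * (K2 p φ + C * B) * (nn f t - nn f s) := by positivity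
          have q2 : 0 ≤ η * C1 * (mm a t - mm a s) := by positivity
          linarith
      _ ≤ ε * ((mm a t - mm a s) + (nn f t - nn f s)) := by gcongr
      _ = _ := by ring)
  simp only [hg] at this
  rw [intervalIntegral.integral_same, sub_zero] at this
  have e0 : u 0 = u0 := h.mild_zero
  rw [e0] at this
  linarith

/-- uniqueness -/
lemma Good.unique (h : Good a) {T : ℝ} {w : ℝ → X d p} (hw : ContinuousOn w (Icc 0 T))
    (hweak : Weak T a 0 0 w) : ∀ t ∈ Icc 0 T, w t = 0 := by
  intro t0 ht0
  have hw00 : w 0 = 0 := by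
    apply eq_zero_of_PL
    intro φ hφ
    have := hweak φ hφ 0 ⟨le_rfl, ht0.1.trans ht0.2⟩
    simpa using this
  apply eq_zero_of_PL
  intro φ hφ
  have hw' : ContinuousOn w (Icc 0 t0) := hw.mono (Icc_subset_Icc_right ht0.2)
  obtain ⟨B, hB0, hB⟩ := bounded hw'
  obtain ⟨C, hC0, hC⟩ := h.U_gen (p := p) hφ
  set g : ℝ → ℝ := fun s => PL φ (U p a s t0 (w s)) with hg
  have := const_aux g (mm a) t0 ht0.1 (by
    intro ε hε
    have hK := K2_nonneg (p := p) φ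
    set η := ε / (K2 p φ + C * B + 1) with hη
    have hη0 : 0 < η := by positivity
    have hηε : η * (K2 p φ + C * B) ≤ ε := by
      have : η ≤ ε / (K2 p φ + C * B + 1) := le_rfl
      rw [le_div_iff₀ (by positivity)] at this
      linarith
    obtain ⟨δ1, hδ1, h1⟩ := modulus (T := t0) hw' η hη0
    obtain ⟨δ2, hδ2, h2⟩ := modulus (T := t0) h.mm_cont.continuousOn (η ^ 2) (by positivity)
    refine ⟨min δ1 δ2, by positivity, fun s t hs hst ht hd => ?_⟩
    have hd1 := hd.trans_le (min_le_left _ _)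
    have hd2 := hd.trans_le (min_le_right _ _)
    have hm0 := h.mm_mono hst
    have hm := h2 s t hs hst ht hd2
    rw [Real.norm_eq_abs, abs_of_nonneg hm0] at hm
    have hsq : √(mm a t - mm a s) ≤ η := by
      rw [Real.sqrt_le_left hη0.le]; exact hm
    have e : g t - g s = PL φ (U p a t t0 (w t - U p a s t (w s))) := by
      simp only [hg]
      rw [map_sub, map_sub, h.U_comp hst ht]
    rw [e]
    refine PL_TH_le _ _ _ _ fun y => ?_
    have hsc : ∀ {s t : ℝ}, 0 ≤ s → t ≤ t0 → ContinuousOn (fun r => sh y (w r)) (Icc s t) := by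
      intro s t hs ht
      exact (sh y : X d p →ₗᵢ[ℝ] X d p).continuous.comp_continuousOn
        (hw'.mono (Icc_subset_Icc hs ht))
    have hwk : ∀ t ∈ Icc 0 t0, PL φ (sh y (w t)) =
        ∫ r in (0:ℝ)..t, ∑ i, ∑ j, a r i j * PL (pd i (pd j φ)) (sh y (w r)) := by
      intro t ht
      have := hweak (trans y φ) (hφ.trans y) t ⟨ht.1, ht.2.trans ht0.2⟩
      simpa [pd_trans, PL_trans hφ, PL_trans ((hφ.pd _).pd _)] using this
    have hinc : PL φ (sh y (w t)) - PL φ (sh y (w s)) =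
        ∫ r in s..t, ∑ i, ∑ j, a r i j * PL (pd i (pd j φ)) (sh y (w r)) := by
      rw [hwk t ⟨hs.trans hst, ht⟩, hwk s ⟨hs, hst.trans ht⟩]
      exact intervalIntegral.integral_interval_sub_left
        (h.int_sum (hs.trans hst) (hsc le_rfl ht) φ) (h.int_sum hs (hsc le_rfl (hst.trans ht)) φ)
    have T2 := h.freeze hst (x := fun r => sh y (w r)) (hsc hs ht) φ η
      (fun r hr => by
        rw [← map_sub, LinearIsometry.norm_map]
        exact h1 s r hs hr.1 (hr.2.trans ht) (by linarith [hr.2]))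
    have T1 := hC (sh y (w s)) s t hst
    have hcomm : U p a s t (sh y (w s)) = sh y (U p a s t (w s)) := (TH_sh _ _ _).symm
    rw [hcomm, LinearIsometry.norm_map] at T1
    have T1' : C * ‖w s‖ * ((mm a t - mm a s) * √(mm a t - mm a s)) ≤
        C * B * ((mm a t - mm a s) * η) := by
      gcongr
      exact hB s ⟨hs, hst.trans ht⟩
    have e2 : PL φ (sh y (w t - U p a s t (w s))) =
        ((∫ r in s..t, ∑ i, ∑ j, a r i j * PL (pd i (pd j φ)) (sh y (w r)))
          - ∑ i, ∑ j, Hm a s t i j * PL (pd i (pd j φ)) (sh y (w s)))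
        - (PL φ (sh y (U p a s t (w s))) - PL φ (sh y (w s))
          - ∑ i, ∑ j, Hm a s t i j * PL (pd i (pd j φ)) (sh y (w s))) := by
      rw [← hinc, map_sub, map_sub]
      ring
    rw [e2]
    refine (abs_sub _ _).trans ?_
    calc _ ≤ K2 p φ * η * (mm a t - mm a s) + C * B * ((mm a t - mm a s) * η) := by linarith
      _ = (η * (K2 p φ + C * B)) * (mm a t - mm a s) := by ring
      _ ≤ _ := by gcongr)
  simp only [hg] at this
  rw [h.U_self, hw00, map_zero, map_zero] at this
  exact this

end WP

namespace WP

lemma jensen {E : Type*} [NormedAddCommGroup E] {q T : ℝ} (hq : 1 < q) (hT : 0 < T) {f : ℝ → E}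
    (hf : IntegrableOn f (Ioc 0 T)) (hfq : IntegrableOn (fun t => ‖f t‖ ^ q) (Ioc 0 T)) :
    (∫ r in Ioc 0 T, ‖f r‖) ^ q ≤ T ^ q * T⁻¹ * ∫ r in Ioc 0 T, ‖f r‖ ^ q := by
  have hc := (convexOn_rpow hq.le).map_set_average_le (μ := volume) (t := Ioc 0 T)
    (f := fun r => ‖f r‖)
    (continuousOn_id.rpow_const fun x _ => Or.inr (by linarith)) isClosed_Ici
    (by simp [hT]) (by simp) (.of_forall fun r => norm_nonneg _) hf.norm hfq
  simp only [setAverage_eq, Function.comp_def] at hc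
  simp only [Measure.real, Real.volume_Ioc, sub_zero, ENNReal.toReal_ofReal hT.le,
    smul_eq_mul] at hc
  have h0 : 0 ≤ ∫ r in Ioc 0 T, ‖f r‖ := integral_nonneg fun _ => norm_nonneg _
  rw [Real.mul_rpow (by positivity) h0, Real.inv_rpow hT.le] at hc
  have hTq : 0 < T ^ q := Real.rpow_pos_of_pos hT q
  calc (∫ r in Ioc 0 T, ‖f r‖) ^ q = T ^ q * ((T ^ q)⁻¹ * (∫ r in Ioc 0 T, ‖f r‖) ^ q) := by
        field_simp
    _ ≤ T ^ q * (T⁻¹ * ∫ r in Ioc 0 T, ‖f r‖ ^ q) := by gcongr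
    _ = _ := by ring

lemma add_pow_le {q x y : ℝ} (hq : 1 < q) (hx : 0 ≤ x) (hy : 0 ≤ y) :
    (x + y) ^ q ≤ 2 ^ q * (x ^ q + y ^ q) := by
  have hxq := Real.rpow_nonneg hx q
  have hyq := Real.rpow_nonneg hy q
  have h2 := Real.rpow_nonneg (zero_le_two (α := ℝ)) q
  rcases le_total x y with h | h
  · calc (x + y) ^ q ≤ (2 * y) ^ q :=
          Real.rpow_le_rpow (by positivity) (by linarith) (by linarith)
      _ = 2 ^ q * y ^ q := Real.mul_rpow (by norm_num) hy
      _ ≤ _ := by gcongr; linarith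
  · calc (x + y) ^ q ≤ (2 * x) ^ q :=
          Real.rpow_le_rpow (by positivity) (by linarith) (by linarith)
      _ = 2 ^ q * x ^ q := Real.mul_rpow (by norm_num) hx
      _ ≤ _ := by gcongr; linarith

lemma integrableOn_of_rpow {E : Type*} [NormedAddCommGroup E] {q T : ℝ} (hq : 1 < q) {f : ℝ → E}
    (hf : AEStronglyMeasurable f (volume.restrict (Ioc 0 T)))
    (hfq : IntegrableOn (fun t => ‖f t‖ ^ q) (Ioc 0 T)) : IntegrableOn f (Ioc 0 T) := by
  have h1 : IntegrableOn (fun _ : ℝ => (1:ℝ)) (Ioc 0 T) := integrableOn_const (by simp)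
  refine (h1.add hfq).mono' hf (.of_forall fun t => ?_)
  simp only [Pi.add_apply]
  have h0 := Real.rpow_nonneg (norm_nonneg (f t)) q
  rcases le_total ‖f t‖ 1 with h | h
  · linarith
  · have := Real.self_le_rpow_of_one_le h hq.le
    linarith

variable {d : ℕ} {p : ℝ≥0∞} [Fact (1 ≤ p)] [hpt : Fact (p ≠ ∞)]
variable {a : ℝ → Fin d → Fin d → ℝ}

/-- coefficients cut off outside of the time interval -/
def cut (T : ℝ) (a : ℝ → Fin d → Fin d → ℝ) (t : ℝ) (i j : Fin d) : ℝ :=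
  (Ioc 0 T).indicator (fun s => a s i j) t

lemma cut_of_mem {T t : ℝ} (ht : t ∈ Ioc 0 T) (i j : Fin d) : cut T a t i j = a t i j := by
  simp only [cut, indicator_of_mem ht]

lemma cut_of_notMem {T t : ℝ} (ht : t ∉ Ioc 0 T) (i j : Fin d) : cut T a t i j = 0 := by
  simp only [cut, indicator_of_notMem ht]

lemma good_cut {T : ℝ} (hm : ∀ i j, Measurable fun t => a t i j)
    (hs : ∀ t ∈ Ioc (0:ℝ) T, ∀ i j, a t i j = a t j i)
    (hpos : ∀ t ∈ Ioc (0:ℝ) T, ∀ ξ : Fin d → ℝ, 0 ≤ ∑ i, ∑ j, a t i j * ξ i * ξ j)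
    (hi : IntegrableOn (aMax a) (Ioc (0:ℝ) T)) : Good (cut T a) := by
  refine ⟨fun i j => ?_, fun t i j => ?_, fun t ξ => ?_⟩
  · have : IntegrableOn (fun t => a t i j) (Ioc 0 T) := by
      refine hi.mono' (hm i j).aestronglyMeasurable (.of_forall fun t => ?_)
      rw [Real.norm_eq_abs]
      calc |a t i j| ≤ ⨆ j, |a t i j| := le_ciSup (f := fun j => |a t i j|) (finite_range _).bddAbove j
        _ ≤ _ := le_ciSup (f := fun i => ⨆ j, |a t i j|) (finite_range _).bddAbove i
    exact this.integrable_indicator measurableSet_Ioc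
  · by_cases ht : t ∈ Ioc 0 T
    · rw [cut_of_mem ht, cut_of_mem ht, hs t ht]
    · rw [cut_of_notMem ht, cut_of_notMem ht]
  · by_cases ht : t ∈ Ioc 0 T
    · simpa only [cut_of_mem ht] using hpos t ht ξ
    · simp [cut_of_notMem ht]

lemma weak_iff {T : ℝ} {u0 : X d p} {f u : ℝ → X d p} :
    IsWeakSolution p T a u0 f u ↔ Weak T (cut T a) u0 ((Ioc 0 T).indicator f) u := by
  have key : ∀ φ : (Fin d → ℝ) → ℝ, IsTest φ → ∀ t ∈ Icc (0:ℝ) T,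
      ((∫ x, u t x * φ x) = (∫ x, u0 x * φ x) + ∫ s in Ioc (0:ℝ) t,
          ((∑ i, ∑ j, a s i j * ∫ x, u s x * pd i (pd j φ) x) + ∫ x, f s x * φ x)) ↔
      PL φ (u t) = PL φ u0 + ∫ r in (0:ℝ)..t,
        ((∑ i, ∑ j, cut T a r i j * PL (pd i (pd j φ)) (u r)) +
          PL φ ((Ioc 0 T).indicator f r)) := by
    intro φ hφ t ht
    rw [PL_apply hφ, PL_apply hφ, intervalIntegral.integral_of_le ht.1]
    have : ∫ s in Ioc (0:ℝ) t,
          ((∑ i, ∑ j, a s i j * ∫ x, u s x * pd i (pd j φ) x) + ∫ x, f s x * φ x) =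
        ∫ r in Ioc (0:ℝ) t, ((∑ i, ∑ j, cut T a r i j * PL (pd i (pd j φ)) (u r)) +
          PL φ ((Ioc 0 T).indicator f r)) := by
      refine setIntegral_congr_fun measurableSet_Ioc fun r hr => ?_
      have hr' : r ∈ Ioc 0 T := ⟨hr.1, hr.2.trans ht.2⟩
      simp only [cut_of_mem hr', indicator_of_mem hr', PL_apply hφ, PL_apply ((hφ.pd _).pd _)]
    rw [this]
  exact ⟨fun h φ hφ t ht => (key φ hφ t ht).1 (h φ hφ.1 hφ.2 t ht),
    fun h φ h1 h2 t ht => (key φ ⟨h1, h2⟩ t ht).2 (h φ ⟨h1, h2⟩ t ht)⟩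

lemma Weak.sub (h : Good a) {T : ℝ} {u0 : X d p} {f u v : ℝ → X d p} (hf : Integrable f)
    (hu : ContinuousOn u (Icc 0 T)) (hv : ContinuousOn v (Icc 0 T))
    (hwu : Weak T a u0 f u) (hwv : Weak T a u0 f v) :
    Weak T a 0 0 (fun t => v t - u t) := by
  intro φ hφ t ht
  have hsub : Icc 0 t ⊆ Icc 0 T := Icc_subset_Icc_right ht.2
  have hPf : IntervalIntegrable (fun r => PL φ (f r)) volume 0 t :=
    ((PL φ).integrable_comp hf).intervalIntegrable
  have iu := (h.int_sum ht.1 (hu.mono hsub) φ).add hPf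
  have iv := (h.int_sum ht.1 (hv.mono hsub) φ).add hPf
  rw [map_sub, hwu φ hφ t ht, hwv φ hφ t ht, add_sub_add_left_eq_sub,
    ← intervalIntegral.integral_sub iv iu]
  simp only [map_zero, zero_add, Pi.zero_apply, add_zero]
  congr 1
  funext r
  simp only [map_sub, mul_sub, Finset.sum_sub_distrib]
  ring

end WP

/-- Well-posedness: under `∫_0^T |a(t)| dt < ∞` there exists a unique weak solution,
continuous from `[0,T]` into `L_p`, satisfying the a priori estimate with `N = N(p,T)`. -/
theorem well_posedness (p T : ℝ) (hp : 1 < p) (hT : 0 < T)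
    [Fact (1 ≤ ENNReal.ofReal p)] :
    ∃ N : ℝ, 0 < N ∧
      ∀ (d : ℕ), 0 < d →
      ∀ (a : ℝ → Fin d → Fin d → ℝ),
        (∀ i j, Measurable fun t => a t i j) →
        (∀ t ∈ Ioc (0:ℝ) T, ∀ i j, a t i j = a t j i) →
        (∀ t ∈ Ioc (0:ℝ) T, ∀ ξ : Fin d → ℝ,
          0 ≤ ∑ i, ∑ j, a t i j * ξ i * ξ j) →
        IntegrableOn (aMax a) (Ioc (0:ℝ) T) →
      ∀ (u0 : Lp ℝ (ENNReal.ofReal p) (volume : Measure (Fin d → ℝ)))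
        (f : ℝ → Lp ℝ (ENNReal.ofReal p) (volume : Measure (Fin d → ℝ))),
        AEStronglyMeasurable f (volume.restrict (Ioc (0:ℝ) T)) →
        IntegrableOn (fun t => ‖f t‖ ^ p) (Ioc (0:ℝ) T) →
        ∃ u : ℝ → Lp ℝ (ENNReal.ofReal p) (volume : Measure (Fin d → ℝ)),
          ContinuousOn u (Icc (0:ℝ) T) ∧
          IsWeakSolution (ENNReal.ofReal p) T a u0 f u ∧
          (∀ t ∈ Icc (0:ℝ) T,
            ‖u t‖ ^ p ≤ N * (‖u0‖ ^ p + ∫ s in Ioc (0:ℝ) T, ‖f s‖ ^ p)) ∧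
          (∀ v : ℝ → Lp ℝ (ENNReal.ofReal p) (volume : Measure (Fin d → ℝ)),
            ContinuousOn v (Icc (0:ℝ) T) →
            IsWeakSolution (ENNReal.ofReal p) T a u0 f v →
            ∀ t ∈ Icc (0:ℝ) T, v t = u t) := by
  have hTp : 0 < T ^ p := Real.rpow_pos_of_pos hT p
  have h2p : (0:ℝ) < 2 ^ p := Real.rpow_pos_of_pos two_pos p
  refine ⟨2 ^ p * (1 + T ^ p * T⁻¹), by positivity, ?_⟩
  intro d _ a hm hs hpos hi u0 f hf hfp
  haveI : Fact (ENNReal.ofReal p ≠ ∞) := ⟨ENNReal.ofReal_ne_top⟩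
  have hg := WP.good_cut hm hs hpos hi
  have hfi := WP.integrableOn_of_rpow hp hf hfp
  have hf' : Integrable ((Ioc 0 T).indicator f) := hfi.integrable_indicator measurableSet_Ioc
  have hc : ContinuousOn (WP.mild (WP.cut T a) u0 ((Ioc 0 T).indicator f)) (Icc 0 T) :=
    (hg.mild_cont hf').mono Icc_subset_Ici_self
  have hw := hg.mild_weak (u0 := u0) hf' T
  refine ⟨_, hc, WP.weak_iff.2 hw, fun t ht => ?_, fun v hv hwv t ht => ?_⟩
  · have h1 := WP.mild_norm (a := WP.cut T a) (u0 := u0) hf' ht.1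
    have h2 : ∫ r in (0:ℝ)..t, ‖(Ioc 0 T).indicator f r‖ ≤ ∫ r in Ioc 0 T, ‖f r‖ := by
      rw [intervalIntegral.integral_of_le ht.1]
      calc ∫ r in Ioc 0 t, ‖(Ioc 0 T).indicator f r‖ = ∫ r in Ioc 0 t, ‖f r‖ := by
            refine setIntegral_congr_fun measurableSet_Ioc fun r hr => ?_
            have hr' : r ∈ Ioc 0 T := ⟨hr.1, hr.2.trans ht.2⟩
            simp only [indicator_of_mem hr']
        _ ≤ _ := setIntegral_mono_set hfi.norm (.of_forall fun _ => norm_nonneg _)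
            (Ioc_subset_Ioc_right ht.2).eventuallyLE
    have h0 : 0 ≤ ∫ r in Ioc 0 T, ‖f r‖ := integral_nonneg fun _ => norm_nonneg _
    have hI : 0 ≤ ∫ r in Ioc 0 T, ‖f r‖ ^ p :=
      integral_nonneg fun _ => Real.rpow_nonneg (norm_nonneg _) _
    have hu0 := Real.rpow_nonneg (norm_nonneg u0) p
    have hTT : 0 < T ^ p * T⁻¹ := by positivity
    have h3 := WP.jensen hp hT hfi hfp
    calc _ ≤ (‖u0‖ + ∫ r in Ioc 0 T, ‖f r‖) ^ p :=
          Real.rpow_le_rpow (norm_nonneg _) (by linarith) (by linarith)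
      _ ≤ 2 ^ p * (‖u0‖ ^ p + (∫ r in Ioc 0 T, ‖f r‖) ^ p) :=
          WP.add_pow_le hp (norm_nonneg _) h0
      _ ≤ 2 ^ p * ((1 + T ^ p * T⁻¹) * (‖u0‖ ^ p + ∫ r in Ioc 0 T, ‖f r‖ ^ p)) := by
          gcongr
          nlinarith [mul_nonneg hTT.le hu0]
      _ = _ := by ring
  · have := hg.unique (hv.sub hc) (WP.Weak.sub hg hf' hc hv hw (WP.weak_iff.1 hwv)) t ht
    exact sub_eq_zero.1 this

end
end
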